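/- arXiv:2209.03852 — 2 statements merged into one kernel-verified Lean document; each statement's English description precedes it below -/
import Mathlib

section
/- Let H²_β be the weighted Hardy space induced by a weight sequence w = (w_k)_{k≥1} with w_k → 1, let B(z) = ∏_{j=1}^m (z_j − z)/(1 − conj(z_j)z) be a Blaschke product of order m, and let S(f)(z) = (f(z) − f(0))/z, B̄(z) = conj(B(conj z)). Suppose {f_1, …, f_m} is a basis of the m-dimensional kernel Ker(B̄(S)). Then the sequence {f_j · B^n : 1 ≤ j ≤ m, n = 0, 1, 2, …} is total and finitely linearly independent in H²_β. -/
noncomputable section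

open Complex Filter Topology

/-- The sequence-space (ℓ²) model of a weighted Hardy space `H²_β`.
An element `a : H2` represents the analytic function whose `k`-th Taylor
coefficient is `a k / β k` (so that `‖a‖` is exactly the `H²_β`-norm). -/
abbrev H2 : Type := lp (fun _ : ℕ => ℂ) 2

/-- The direct sum (ℓ²-sense) of `m` copies of `H2`. -/
abbrev Hm (m : ℕ) : Type := PiLp 2 (fun _ : Fin m => H2)

/-- The open unit disk 𝔻 ⊆ ℂ. -/
def unitDisk : Set ℂ := Metric.ball 0 1

/-- `β_0 = 1` and `β_k = ∏_{j=1}^k w_j`. -/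
def betaSeq (w : ℕ → ℝ) (k : ℕ) : ℝ := ∏ j ∈ Finset.Icc 1 k, w j

/-- The analytic function on 𝔻 represented by the vector `a` in the model of `H²_β`:
`f(z) = ∑_k (a k / β k) z^k`. -/
def repFun (β : ℕ → ℝ) (a : H2) (z : ℂ) : ℂ := ∑' k, (a k / (β k : ℂ)) * z ^ k

/-- `T` is (the ℓ²-model of) the multiplication operator `M_g` on `H²_β`.
Existence of such a `T` says precisely that `M_g` is bounded on `H²_β`. -/
def RepMul (β : ℕ → ℝ) (g : ℂ → ℂ) (T : H2 →L[ℂ] H2) : Prop :=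
  ∀ a : H2, ∀ z ∈ unitDisk, repFun β (T a) z = g z * repFun β a z

/-- `T` is (the ℓ²-model of) the composition operator `C_ψ` on `H²_β`.
Existence of such a `T` says precisely that `C_ψ` is bounded on `H²_β`. -/
def RepComp (β : ℕ → ℝ) (ψ : ℂ → ℂ) (T : H2 →L[ℂ] H2) : Prop :=
  ∀ a : H2, ∀ z ∈ unitDisk, repFun β (T a) z = repFun β a (ψ z)

/-- The Möbius factor `φ_{z₀}(z) = (z₀ - z)/(1 - conj z₀ · z)`. -/
def mobius (z₀ z : ℂ) : ℂ := (z₀ - z) / (1 - (starRingEnd ℂ) z₀ * z)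

/-- `φ` belongs to `Aut(𝔻)`, i.e. `φ(z) = e^{iθ}(z₀ - z)/(1 - conj z₀ · z)`. -/
def IsDiskAut (φ : ℂ → ℂ) : Prop :=
  ∃ (θ : ℝ) (z₀ : ℂ), z₀ ∈ unitDisk ∧
    ∀ z, φ z = Complex.exp (θ * Complex.I) * mobius z₀ z

/-- `B` is a finite Blaschke product of order `m`. -/
def IsBlaschke (m : ℕ) (B : ℂ → ℂ) : Prop :=
  ∃ (θ : ℝ) (zs : Fin m → ℂ), (∀ j, zs j ∈ unitDisk) ∧
    ∀ z, B z = Complex.exp (θ * Complex.I) * ∏ j, mobius (zs j) z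

/-- `w` is a positive weight sequence tending to `1` such that the weighted Hardy
space `H²_β` is of polynomial growth: `sup_k (k+1)|w_k - 1| < ∞`. -/
def PolyGrowth (w : ℕ → ℝ) : Prop :=
  (∀ k, 1 ≤ k → 0 < w k) ∧ Tendsto w atTop (nhds 1) ∧
    ∃ M : ℝ, ∀ k : ℕ, 1 ≤ k → ((k : ℝ) + 1) * |w k - 1| ≤ M

/-- `f` is analytic on an open neighbourhood of the closed unit disk. -/
def AnalyticOnClosedDisk (f : ℂ → ℂ) : Prop :=
  ∃ U : Set ℂ, IsOpen U ∧ Metric.closedBall (0:ℂ) 1 ⊆ U ∧ AnalyticOnNhd ℂ f U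

/-- `S` is (the ℓ²-model of) the standard left inverse of `M_z` on `H²_β`,
`S(f)(z) = (f(z) - f(0))/z`. -/
def RepS (β : ℕ → ℝ) (S : H2 →L[ℂ] H2) : Prop :=
  ∀ a : H2, ∀ z ∈ unitDisk, z ≠ 0 →
    repFun β (S a) z = (repFun β a z - repFun β a 0) / z

/-- The operator `B̄(S)` given by the holomorphic functional calculus for the
Blaschke product with zeros `zs`:  `B̄(S) = ∏_j (conj z_j - S)(1 - z_j S)⁻¹`. -/
def blaschkeBarOp {m : ℕ} (zs : Fin m → ℂ) (S : H2 →L[ℂ] H2) : H2 →L[ℂ] H2 :=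
  (List.ofFn fun j : Fin m =>
    ((starRingEnd ℂ) (zs j) • (1 : H2 →L[ℂ] H2) - S) *
      Ring.inverse ((1 : H2 →L[ℂ] H2) - zs j • S)).prod


/-- Uniqueness of power series coefficients (punctured version). -/
lemma coeff_zero_of_hasSum (d : ℕ → ℂ) (r : ℝ) (hr : 0 < r)
    (h : ∀ z : ℂ, ‖z‖ < r → z ≠ 0 → HasSum (fun k => d k * z ^ k) 0) : ∀ k, d k = 0 := by
  classical
  set F : ℂ → ℂ := fun z => if z = 0 then d 0 else 0 with hF
  have hp : HasFPowerSeriesAt F (FormalMultilinearSeries.ofScalars ℂ d) 0 := by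
    rw [hasFPowerSeriesAt_iff]
    filter_upwards [Metric.ball_mem_nhds (0 : ℂ) hr] with z hz
    have hz' : ‖z‖ < r := by simpa using hz
    by_cases h0 : z = 0
    · subst h0
      have := hasSum_single (f := fun n : ℕ => (0 : ℂ) ^ n • (FormalMultilinearSeries.ofScalars ℂ d).coeff n) 0
        (by intro n hn; simp [hn])
      simpa [hF, FormalMultilinearSeries.coeff_ofScalars] using this
    · have := h z hz' h0
      simpa [hF, h0, FormalMultilinearSeries.coeff_ofScalars, mul_comm] using this
  have hc : ContinuousAt F 0 := hp.continuousAt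
  have h1 : Tendsto F (𝓝[≠] 0) (𝓝 (F 0)) := hc.tendsto.mono_left nhdsWithin_le_nhds
  have h2 : Tendsto F (𝓝[≠] 0) (𝓝 0) := by
    refine tendsto_const_nhds.congr' ?_
    filter_upwards [self_mem_nhdsWithin] with z hz
    have : z ≠ 0 := hz
    simp [hF, this]
  have h3 : d 0 = 0 := by
    have := tendsto_nhds_unique h1 h2
    simpa [hF] using this
  have hF0 : F = 0 := by
    funext z
    simp [hF, h3]
  rw [hF0] at hp
  have h4 := hp.eq_zero
  have h5 := FormalMultilinearSeries.ofScalars_series_eq_zero (𝕜 := ℂ) (E := ℂ) (c := d) |>.1 h4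
  intro k
  exact congrFun h5 k

lemma H2_summable (a : H2) : Summable fun k => ‖a k‖ ^ 2 := by
  have := (lp.memℓp a).summable (by norm_num)
  simpa using this

lemma H2_norm_sq (a : H2) : ‖a‖ ^ 2 = ∑' k, ‖a k‖ ^ 2 := by
  have := lp.norm_rpow_eq_tsum (p := 2) (by norm_num) a
  simpa using this

lemma H2_norm_le {a : H2} {C : ℝ} (hC : 0 ≤ C) (h : ∑' k, ‖a k‖ ^ 2 ≤ C ^ 2) : ‖a‖ ≤ C := by
  rw [← H2_norm_sq] at h
  exact (sq_le_sq₀ (norm_nonneg _) hC).1 h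

/-- Norm bound for forward weighted shifts. -/
lemma fwd_norm_le (n : ℕ) (a b : H2) (C : ℝ) (hC : 0 ≤ C)
    (h0 : ∀ k, k < n → b k = 0) (h1 : ∀ k, ‖b (k + n)‖ ≤ C * ‖a k‖) : ‖b‖ ≤ C * ‖a‖ := by
  apply H2_norm_le (by positivity)
  rw [← (H2_summable b).sum_add_tsum_nat_add n]
  rw [Finset.sum_eq_zero (fun k hk => by rw [h0 k (Finset.mem_range.1 hk)]; simp), zero_add,
    mul_pow, H2_norm_sq, ← tsum_mul_left]
  refine Summable.tsum_le_tsum (fun k => ?_) ((summable_nat_add_iff n).2 (H2_summable b))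
    ((H2_summable a).mul_left _)
  rw [← mul_pow]
  exact pow_le_pow_left₀ (norm_nonneg _) (h1 k) 2

/-- Norm bound for backward weighted shifts. -/
lemma bwd_norm_le (n : ℕ) (a b : H2) (C : ℝ) (hC : 0 ≤ C)
    (h1 : ∀ k, ‖b k‖ ≤ C * ‖a (k + n)‖) : ‖b‖ ≤ C * ‖a‖ := by
  apply H2_norm_le (by positivity)
  rw [mul_pow, H2_norm_sq a, ← (H2_summable a).sum_add_tsum_nat_add n, mul_add, ← tsum_mul_left]
  refine le_add_of_nonneg_of_le (by positivity) ?_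
  refine Summable.tsum_le_tsum (fun k => ?_) (H2_summable b)
    (((summable_nat_add_iff n).2 (H2_summable a)).mul_left _)
  rw [← mul_pow]
  exact pow_le_pow_left₀ (norm_nonneg _) (h1 k) 2

/-- Existence of the forward weighted shift. -/
lemma exists_fwd (v : ℕ → ℝ) (C : ℝ) (hC : ∀ k, |v k| ≤ C) :
    ∃ A : H2 →L[ℂ] H2, (∀ a : H2, A a 0 = 0) ∧ ∀ (a : H2) k, A a (k + 1) = (v k : ℂ) * a k := by
  have hC0 : 0 ≤ C := (abs_nonneg _).trans (hC 0)
  let g : H2 → ℕ → ℂ := fun a k => Nat.casesOn k 0 (fun j => (v j : ℂ) * a j)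
  have hg : ∀ a : H2, Memℓp (g a) 2 := by
    intro a
    apply memℓp_gen
    rw [← summable_nat_add_iff 1]
    refine Summable.of_nonneg_of_le (fun k => by positivity) (fun k => ?_)
      ((H2_summable a).mul_left (C ^ 2))
    simp only [g, ENNReal.toReal_ofNat, Real.rpow_ofNat, norm_mul, mul_pow, Complex.norm_real,
      Real.norm_eq_abs]
    have := hC k
    gcongr
  let L : H2 →ₗ[ℂ] H2 :=
    { toFun := fun a => ⟨g a, hg a⟩
      map_add' := by
        intro a b
        ext k
        cases k with
        | zero => exact (add_zero (0 : ℂ)).symm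
        | succ k => exact mul_add _ _ _
      map_smul' := by
        intro c a
        ext k
        cases k <;> simp [g, mul_left_comm] }
  refine ⟨L.mkContinuous C (fun a => ?_), fun a => rfl, fun a k => rfl⟩
  refine fwd_norm_le 1 a (L a) C hC0 (fun k hk => ?_) (fun k => ?_)
  · obtain rfl : k = 0 := by omega
    rfl
  · change ‖(v k : ℂ) * a k‖ ≤ _
    rw [norm_mul, Complex.norm_real, Real.norm_eq_abs]
    have := hC k
    gcongr

/-- Bound on products of weights. -/
lemma prod_bound (v : ℕ → ℝ) (hv : ∀ k, 0 < v k) (hl : Tendsto v atTop (𝓝 1)) (q : ℝ)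
    (hq0 : 0 ≤ q) (hq : q < 1) :
    ∃ (n : ℕ) (C : ℝ), 0 ≤ C ∧ q ^ n * C < 1 ∧ ∀ k, ∏ i ∈ Finset.range n, v (k + i) ≤ C := by
  obtain ⟨r, hr1, hqr⟩ : ∃ r : ℝ, 1 < r ∧ q * r < 1 := by
    refine ⟨2 / (1 + q), ?_, ?_⟩
    · rw [lt_div_iff₀ (by linarith)]; linarith
    · rw [← mul_div_assoc, div_lt_one (by linarith)]; linarith
  obtain ⟨K, hK⟩ := eventually_atTop.1 (hl.eventually (gt_mem_nhds hr1))
  obtain ⟨M0, hM0⟩ := hl.bddAbove_range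
  set M : ℝ := max 1 M0 with hM
  have hM1 : 1 ≤ M := le_max_left _ _
  have hvM : ∀ k, v k ≤ M := fun k => (hM0 ⟨k, rfl⟩).trans (le_max_right _ _)
  have key : ∀ n k, ∏ i ∈ Finset.range n, v (k + i) ≤ r ^ n * M ^ K := by
    intro n k
    calc ∏ i ∈ Finset.range n, v (k + i)
        ≤ ∏ i ∈ Finset.range n, (r * if i < K then M else 1) := by
          refine Finset.prod_le_prod (fun i _ => (hv _).le) (fun i _ => ?_)
          split_ifs with h
          · nlinarith [hvM (k + i)]
          · rw [mul_one]; exact (hK (k + i) (by omega)).le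
      _ = r ^ n * ∏ i ∈ Finset.range n, (if i < K then M else 1) := by
          rw [Finset.prod_mul_distrib]; simp
      _ = r ^ n * M ^ ((Finset.range n).filter (· < K)).card := by
          rw [← Finset.prod_filter, Finset.prod_const]
      _ ≤ r ^ n * M ^ K := by
          have : ((Finset.range n).filter (· < K)).card ≤ K := by
            calc _ ≤ (Finset.range K).card := Finset.card_le_card (fun i hi => by
                  simp at hi ⊢; exact hi.2)
              _ = K := by simp
          have hr0 : 0 ≤ r ^ n := by positivity
          exact mul_le_mul_of_nonneg_left (pow_le_pow_right₀ hM1 this) hr0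
  have ht : Tendsto (fun n : ℕ => (q * r) ^ n * M ^ K) atTop (𝓝 (0 * M ^ K)) :=
    (tendsto_pow_atTop_nhds_zero_of_lt_one (by positivity) hqr).mul_const _
  rw [zero_mul] at ht
  obtain ⟨n, hn⟩ := (ht.eventually (gt_mem_nhds one_pos)).exists
  refine ⟨n, r ^ n * M ^ K, by positivity, ?_, key n⟩
  rw [← mul_assoc, ← mul_pow]; exact hn

lemma unit_of_pow_norm (T : H2 →L[ℂ] H2) (μ : ℂ) (n : ℕ) (C : ℝ) (hC : ‖T ^ n‖ ≤ C)
    (h : ‖μ‖ ^ n * C < 1) : IsUnit (1 - μ • T) := by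
  have h1 : ‖(μ • T) ^ n‖ < 1 := by
    rw [smul_pow, norm_smul, norm_pow]
    exact (mul_le_mul_of_nonneg_left hC (by positivity)).trans_lt h
  have h2 : IsUnit (1 - (μ • T) ^ n) := (Units.oneSub _ h1).isUnit
  rw [← mul_neg_geom_sum (μ • T) n] at h2
  have hc : Commute (1 - μ • T) (∑ i ∈ Finset.range n, (μ • T) ^ i) :=
    Commute.sum_right _ _ _ (fun i _ =>
      ((Commute.one_left _).sub_left ((Commute.refl (μ • T)).pow_right i)))
  exact (hc.isUnit_mul_iff.1 h2).1

lemma fwd_unit (v : ℕ → ℝ) (hv : ∀ k, 0 < v k) (hl : Tendsto v atTop (𝓝 1)) (A : H2 →L[ℂ] H2)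
    (h0 : ∀ a : H2, A a 0 = 0) (h1 : ∀ (a : H2) k, A a (k + 1) = (v k : ℂ) * a k)
    (μ : ℂ) (hμ : ‖μ‖ < 1) : IsUnit (1 - μ • A) := by
  obtain ⟨n, C, hC, hq, hb⟩ := prod_bound v hv hl ‖μ‖ (norm_nonneg _) hμ
  have hp0 : ∀ (n : ℕ) (a : H2) k, k < n → (A ^ n) a k = 0 := by
    intro n
    induction n with
    | zero => intro a k hk; omega
    | succ n ih =>
      intro a k hk
      rw [pow_succ', mul_apply_eq_comp]
      cases k with
      | zero => exact h0 _
      | succ k => rw [h1, ih a k (by omega), mul_zero]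
  have hp1 : ∀ (n : ℕ) (a : H2) k,
      (A ^ n) a (k + n) = ((∏ i ∈ Finset.range n, v (k + i) : ℝ) : ℂ) * a k := by
    intro n
    induction n with
    | zero => intro a k; simp
    | succ n ih =>
      intro a k
      rw [pow_succ', mul_apply_eq_comp, ← add_assoc, h1, ih, Finset.prod_range_succ]
      push_cast; ring
  refine unit_of_pow_norm A μ n C (ContinuousLinearMap.opNorm_le_bound _ hC fun a => ?_) hq
  refine fwd_norm_le n a _ C hC (hp0 n a) (fun k => ?_)
  rw [hp1, norm_mul, Complex.norm_real, Real.norm_eq_abs,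
    abs_of_nonneg (Finset.prod_nonneg fun i _ => (hv _).le)]
  have := hb k
  gcongr

lemma bwd_unit (v : ℕ → ℝ) (hv : ∀ k, 0 < v k) (hl : Tendsto v atTop (𝓝 1)) (S : H2 →L[ℂ] H2)
    (h1 : ∀ (a : H2) k, S a k = (v k : ℂ) * a (k + 1))
    (μ : ℂ) (hμ : ‖μ‖ < 1) : IsUnit (1 - μ • S) := by
  obtain ⟨n, C, hC, hq, hb⟩ := prod_bound v hv hl ‖μ‖ (norm_nonneg _) hμ
  have hp1 : ∀ (n : ℕ) (a : H2) k,
      (S ^ n) a k = ((∏ i ∈ Finset.range n, v (k + i) : ℝ) : ℂ) * a (k + n) := by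
    intro n
    induction n with
    | zero => intro a k; simp
    | succ n ih =>
      intro a k
      rw [pow_succ, mul_apply_eq_comp, ih, h1, Finset.prod_range_succ, add_assoc]
      push_cast; ring
  refine unit_of_pow_norm S μ n C (ContinuousLinearMap.opNorm_le_bound _ hC fun a => ?_) hq
  refine bwd_norm_le n a _ C hC (fun k => ?_)
  rw [hp1, norm_mul, Complex.norm_real, Real.norm_eq_abs,
    abs_of_nonneg (Finset.prod_nonneg fun i _ => (hv _).le)]
  have := hb k
  gcongr

lemma beta_succ (w : ℕ → ℝ) (k : ℕ) : betaSeq w (k + 1) = betaSeq w k * w (k + 1) := by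
  unfold betaSeq
  rw [Finset.prod_Icc_succ_top (by omega)]

lemma beta_pos (w : ℕ → ℝ) (hpos : ∀ k, 1 ≤ k → 0 < w k) (k : ℕ) : 0 < betaSeq w k :=
  Finset.prod_pos fun j hj => hpos j (Finset.mem_Icc.1 hj).1

lemma rep_summable (w : ℕ → ℝ) (hpos : ∀ k, 1 ≤ k → 0 < w k) (hlim : Tendsto w atTop (𝓝 1))
    (a : H2) (z : ℂ) (hz : ‖z‖ < 1) :
    Summable fun k => (a k / (betaSeq w k : ℂ)) * z ^ k := by
  by_cases h0 : z = 0
  · subst h0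
    refine summable_of_ne_finset_zero (s := {0}) (fun k hk => ?_)
    have : k ≠ 0 := by simpa using hk
    simp [this]
  have hb := beta_pos w hpos
  have h1 : Summable fun k => ‖z‖ ^ k / betaSeq w k := by
    refine summable_of_ratio_test_tendsto_lt_one (l := ‖z‖) hz
      (Eventually.of_forall fun k => ?_) ?_
    · have := hb k
      have : 0 < ‖z‖ := norm_pos_iff.2 h0
      positivity
    · have ht : Tendsto (fun k => ‖z‖ * (w (k + 1))⁻¹) atTop (𝓝 (‖z‖ * 1⁻¹)) :=
        (((tendsto_add_atTop_iff_nat 1).2 hlim).inv₀ one_ne_zero).const_mul _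
      rw [inv_one, mul_one] at ht
      refine ht.congr fun k => ?_
      have h2 := hb k
      have h3 := hpos (k + 1) (by omega)
      have h4 : 0 < ‖z‖ := norm_pos_iff.2 h0
      have h5 := hb (k + 1)
      rw [Real.norm_of_nonneg (by positivity), Real.norm_of_nonneg (by positivity), beta_succ]
      field_simp
      ring
  refine Summable.of_norm_bounded (h1.mul_left ‖a‖) (fun k => ?_)
  rw [norm_mul, norm_div, norm_pow, Complex.norm_real, Real.norm_of_nonneg (hb k).le]
  have : ‖a k‖ ≤ ‖a‖ := lp.norm_apply_le_norm (by norm_num) a k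
  have := hb k
  rw [div_mul_eq_mul_div, mul_div_assoc]
  gcongr

lemma rep_sub (w : ℕ → ℝ) (hpos : ∀ k, 1 ≤ k → 0 < w k) (hlim : Tendsto w atTop (𝓝 1))
    (a b : H2) (z : ℂ) (hz : ‖z‖ < 1) :
    repFun (betaSeq w) (a - b) z = repFun (betaSeq w) a z - repFun (betaSeq w) b z := by
  unfold repFun
  rw [← (rep_summable w hpos hlim a z hz).tsum_sub (rep_summable w hpos hlim b z hz)]
  refine tsum_congr fun k => ?_
  rw [lp.coeFn_sub, Pi.sub_apply]; ring

lemma rep_smul (w : ℕ → ℝ) (c : ℂ) (a : H2) (z : ℂ) :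
    repFun (betaSeq w) (c • a) z = c * repFun (betaSeq w) a z := by
  unfold repFun
  rw [← tsum_mul_left]
  refine tsum_congr fun k => ?_
  rw [lp.coeFn_smul, Pi.smul_apply, smul_eq_mul]; ring

lemma rep_shift (w : ℕ → ℝ) (hpos : ∀ k, 1 ≤ k → 0 < w k) (hlim : Tendsto w atTop (𝓝 1))
    (A : H2 →L[ℂ] H2) (h0 : ∀ a : H2, A a 0 = 0)
    (h1 : ∀ (a : H2) k, A a (k + 1) = (w (k + 1) : ℂ) * a k) (a : H2) (z : ℂ) (hz : ‖z‖ < 1) :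
    repFun (betaSeq w) (A a) z = z * repFun (betaSeq w) a z := by
  unfold repFun
  rw [(rep_summable w hpos hlim (A a) z hz).tsum_eq_zero_add, h0, ← tsum_mul_left]
  simp only [zero_div, zero_mul, zero_add]
  refine tsum_congr fun k => ?_
  have h2 : (betaSeq w k : ℂ) ≠ 0 := by exact_mod_cast (beta_pos w hpos k).ne'
  have h3 : (w (k + 1) : ℂ) ≠ 0 := by exact_mod_cast (hpos (k + 1) (by omega)).ne'
  rw [h1, beta_succ]
  push_cast
  field_simp
  ring

/-- The coefficients of `S a`. -/
lemma S_coeff (w : ℕ → ℝ) (hpos : ∀ k, 1 ≤ k → 0 < w k) (hlim : Tendsto w atTop (𝓝 1))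
    (S : H2 →L[ℂ] H2) (hS : RepS (betaSeq w) S) (a : H2) (k : ℕ) :
    S a k = (((w (k + 1))⁻¹ : ℝ) : ℂ) * a (k + 1) := by
  have key := coeff_zero_of_hasSum
    (fun k => S a k / (betaSeq w k : ℂ) - a (k + 1) / (betaSeq w (k + 1) : ℂ)) 1 one_pos ?_ k
  · have h2 : (betaSeq w k : ℂ) ≠ 0 := by exact_mod_cast (beta_pos w hpos k).ne'
    have h3 : (w (k + 1) : ℂ) ≠ 0 := by exact_mod_cast (hpos (k + 1) (by omega)).ne'
    simp only [beta_succ] at key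
    push_cast at key ⊢
    field_simp at key ⊢
    linear_combination key
  · intro z hz hz0
    have e := hS a z (by simpa [unitDisk] using hz) hz0
    have s1 := (rep_summable w hpos hlim (S a) z hz).hasSum
    have s2 := (rep_summable w hpos hlim a z hz)
    have s3 := ((summable_nat_add_iff 1).2 s2).hasSum.mul_left z⁻¹
    have e0 : repFun (betaSeq w) a 0 = a 0 / (betaSeq w 0 : ℂ) := by
      unfold repFun
      rw [tsum_eq_single 0 (by intro k hk; simp [hk])]
      simp
    have e1 : repFun (betaSeq w) a z = a 0 / (betaSeq w 0 : ℂ) +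
        ∑' k, (a (k + 1) / (betaSeq w (k + 1) : ℂ)) * z ^ (k + 1) := by
      unfold repFun
      rw [s2.tsum_eq_zero_add]
      simp
    have s4 := s1.sub s3
    have e2 : (∑' k, (S a k / (betaSeq w k : ℂ)) * z ^ k) = repFun (betaSeq w) (S a) z := rfl
    rw [e2, e, e1, e0] at s4
    have e3 : ∀ (x y : ℂ), (x + y - x) / z - z⁻¹ * y = 0 := by
      intro x y
      field_simp
      ring
    rw [e3] at s4
    have e4 : (fun k => (S a k / (betaSeq w k : ℂ) - a (k + 1) / (betaSeq w (k + 1) : ℂ)) * z ^ k)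
        = fun k => S a k / (betaSeq w k : ℂ) * z ^ k -
          z⁻¹ * (a (k + 1) / (betaSeq w (k + 1) : ℂ) * z ^ (k + 1)) := by
      funext k
      have : z⁻¹ * (a (k + 1) / (betaSeq w (k + 1) : ℂ) * z ^ (k + 1)) =
          (z⁻¹ * z) * (a (k + 1) / (betaSeq w (k + 1) : ℂ) * z ^ k) := by ring
      rw [this, inv_mul_cancel₀ hz0]
      ring
    rw [e4]
    exact s4

/-- The key density fact: the union of the kernels of powers of `μ₀ - S` is dense. -/
lemma dense_ker (A S : H2 →L[ℂ] H2) (e : H2) (hSA : S * A = 1) (hSe : S e = 0)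
    (hA : ∀ μ : ℂ, ‖μ‖ < 1 → IsUnit (1 - μ • A))
    (hcyc : ∀ v : H2, (∀ k : ℕ, inner ℂ v ((A ^ k) e) = 0) → v = 0)
    (μ₀ : ℂ) (hμ₀ : ‖μ₀‖ < 1) (v : H2)
    (hv : ∀ (N : ℕ) (x : H2), ((μ₀ • (1 : H2 →L[ℂ] H2) - S) ^ N) x = 0 → inner ℂ v x = 0) :
    v = 0 := by
  set R : ℂ → (H2 →L[ℂ] H2) := fun μ => Ring.inverse (1 - μ • A) with hR
  let ev : (H2 →L[ℂ] H2) →L[ℂ] ℂ := (innerSL ℂ v).comp (ContinuousLinearMap.apply ℂ H2 e)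
  have hev : ∀ X : H2 →L[ℂ] H2, ev X = inner ℂ v (X e) := fun X => rfl
  set G : ℂ → ℂ := fun μ => ev (R μ) with hG
  -- local expansion
  have hexp : ∀ μ₁ : ℂ, ‖μ₁‖ < 1 → ∀ h : ℂ, ‖h‖ * ‖R μ₁ * A‖ < 1 →
      HasSum (fun i : ℕ => ev ((R μ₁ * A) ^ i * R μ₁) * h ^ i) (G (μ₁ + h)) := by
    intro μ₁ hμ₁ h hh
    have hu := hA μ₁ hμ₁
    have hn : ‖h • (R μ₁ * A)‖ < 1 := by rw [norm_smul]; exact hh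
    have hfac : 1 - (μ₁ + h) • A = (1 - μ₁ • A) * (1 - h • (R μ₁ * A)) := by
      rw [mul_sub, mul_one, mul_smul_comm, ← mul_assoc, Ring.mul_inverse_cancel _ hu, one_mul,
        add_smul]
      abel
    have hR1 : R (μ₁ + h) = Ring.inverse (1 - h • (R μ₁ * A)) * R μ₁ := by
      have hu2 : IsUnit (1 - h • (R μ₁ * A)) := (Units.oneSub _ hn).isUnit
      obtain ⟨u1, h1⟩ := hu
      obtain ⟨u2, h2⟩ := hu2
      have : R (μ₁ + h) = Ring.inverse (1 - (μ₁ + h) • A) := rfl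
      rw [this, hfac]
      simp only [hR]
      simp only [hR] at h2
      rw [← h2, ← h1, ← Units.val_mul, Ring.inverse_unit, Ring.inverse_unit, Ring.inverse_unit,
        mul_inv_rev, Units.val_mul]
    have hs := (hasSum_geom_series_inverse _ hn).mul_right (R μ₁)
    rw [← hR1] at hs
    have hs2 := ev.hasSum hs
    have e4 : (fun i : ℕ => ev ((R μ₁ * A) ^ i * R μ₁) * h ^ i) =
        fun i : ℕ => ev ((h • (R μ₁ * A)) ^ i * R μ₁) := by
      funext i
      rw [smul_pow, smul_mul_assoc, map_smul, smul_eq_mul, mul_comm]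
    rw [e4]
    exact hs2
  have hsmall : ∀ Y : H2 →L[ℂ] H2, ∀ᶠ h : ℂ in 𝓝 0, ‖h‖ * ‖Y‖ < 1 := by
    intro Y
    have : Tendsto (fun h : ℂ => ‖h‖ * ‖Y‖) (𝓝 0) (𝓝 (‖(0 : ℂ)‖ * ‖Y‖)) :=
      (continuous_norm.tendsto 0).mul_const _
    rw [norm_zero, zero_mul] at this
    exact this.eventually (gt_mem_nhds one_pos)
  have hana : AnalyticOnNhd ℂ G (Metric.ball 0 1) := by
    intro μ₁ hμ₁
    have hμ₁' : ‖μ₁‖ < 1 := by simpa using hμ₁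
    refine ⟨FormalMultilinearSeries.ofScalars ℂ (fun i => ev ((R μ₁ * A) ^ i * R μ₁)), ?_⟩
    rw [hasFPowerSeriesAt_iff]
    filter_upwards [hsmall (R μ₁ * A)] with h hh
    have := hexp μ₁ hμ₁' h hh
    simpa [FormalMultilinearSeries.coeff_ofScalars, mul_comm] using this
  -- vanishing near `μ₀`
  have hu0 := hA μ₀ hμ₀
  have hD : μ₀ • (1 : H2 →L[ℂ] H2) - S = -(S * (1 - μ₀ • A)) := by
    rw [mul_sub, mul_smul_comm, hSA, mul_one]
    abel
  have hDX : (μ₀ • (1 : H2 →L[ℂ] H2) - S) * (R μ₀ * A) = -1 := by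
    rw [hD, neg_mul, ← mul_assoc, mul_assoc S, Ring.mul_inverse_cancel _ hu0, mul_one, hSA]
  have hDR : (μ₀ • (1 : H2 →L[ℂ] H2) - S) * R μ₀ = -S := by
    rw [hD, neg_mul, mul_assoc S, Ring.mul_inverse_cancel _ hu0, mul_one]
  have hkill : ∀ i : ℕ,
      ((μ₀ • (1 : H2 →L[ℂ] H2) - S) ^ (i + 1) * ((R μ₀ * A) ^ i * R μ₀)) e = 0 := by
    intro i
    induction i with
    | zero =>
      rw [zero_add, pow_one, pow_zero, one_mul, hDR, neg_apply, hSe, neg_zero]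
    | succ i ih =>
      have : (μ₀ • (1 : H2 →L[ℂ] H2) - S) ^ (i + 1 + 1) * ((R μ₀ * A) ^ (i + 1) * R μ₀) =
          -((μ₀ • (1 : H2 →L[ℂ] H2) - S) ^ (i + 1) * ((R μ₀ * A) ^ i * R μ₀)) := by
        rw [pow_succ _ (i + 1), pow_succ' (R μ₀ * A) i]
        calc _ = (μ₀ • (1 : H2 →L[ℂ] H2) - S) ^ (i + 1) *
              (((μ₀ • (1 : H2 →L[ℂ] H2) - S) * (R μ₀ * A)) * ((R μ₀ * A) ^ i * R μ₀)) := by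
              simp only [mul_assoc]
          _ = _ := by rw [hDX, neg_one_mul, mul_neg]
      rw [this, neg_apply, ih, neg_zero]
  have hcoef : ∀ i : ℕ, ev ((R μ₀ * A) ^ i * R μ₀) = 0 := fun i =>
    hv (i + 1) _ (hkill i)
  have hnear : G =ᶠ[𝓝 μ₀] 0 := by
    have ht : Tendsto (fun μ => μ - μ₀) (𝓝 μ₀) (𝓝 0) := by
      exact tendsto_sub_nhds_zero_iff.2 tendsto_id
    filter_upwards [ht.eventually (hsmall (R μ₀ * A))] with μ hμ
    have := hexp μ₀ hμ₀ _ hμ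
    simp only [hcoef, zero_mul, add_sub_cancel] at this
    exact this.unique hasSum_zero
  have hzero := hana.eqOn_zero_of_preconnected_of_eventuallyEq_zero
    (convex_ball (0 : ℂ) 1).isPreconnected (by simpa using hμ₀ : μ₀ ∈ Metric.ball (0 : ℂ) 1) hnear
  have hR0 : R 0 = 1 := by simp [hR]
  apply hcyc
  have hfin := coeff_zero_of_hasSum (fun k => ev (A ^ k)) (min 1 (1 / (‖A‖ + 1))) (by positivity) ?_
  · intro k
    exact hfin k
  · intro z hz _
    have hz1 : ‖z‖ < 1 := hz.trans_le (min_le_left _ _)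
    have hz2 : ‖z‖ < 1 / (‖A‖ + 1) := hz.trans_le (min_le_right _ _)
    rw [lt_div_iff₀ (by positivity)] at hz2
    have hz3 : ‖z‖ * ‖R 0 * A‖ < 1 := by
      rw [hR0, one_mul]
      nlinarith [norm_nonneg z]
    have := hexp 0 (by simp) z hz3
    rw [zero_add, hzero (by simpa using hz1 : z ∈ Metric.ball (0 : ℂ) 1), hR0] at this
    simpa using this

lemma list_left_inv {M : Type*} [Monoid M] : ∀ (n : ℕ) (L T : Fin n → M), (∀ j, L j * T j = 1) →
    (List.ofFn L).prod * (List.ofFn T).reverse.prod = 1 := by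
  intro n
  induction n with
  | zero => intro L T _; simp
  | succ n ih =>
    intro L T h
    rw [List.ofFn_succ, List.ofFn_succ, List.reverse_cons, List.prod_append, List.prod_cons,
      List.prod_singleton]
    have := ih (fun j => L j.succ) (fun j => T j.succ) (fun j => h _)
    calc _ = L 0 * ((List.ofFn fun j => L j.succ).prod * (List.ofFn fun j => T j.succ).reverse.prod)
          * T 0 := by simp only [mul_assoc]
      _ = 1 := by rw [this, mul_one, h]

lemma list_repMul (β : ℕ → ℝ) : ∀ (n : ℕ) (g : Fin n → ℂ → ℂ) (T : Fin n → H2 →L[ℂ] H2),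
    (∀ j, RepMul β (g j) (T j)) →
    RepMul β (fun z => ∏ j, g j z) (List.ofFn T).reverse.prod := by
  intro n
  induction n with
  | zero => intro g T _ a z _; simp
  | succ n ih =>
    intro g T h a z hz
    rw [List.ofFn_succ, List.reverse_cons, List.prod_append, List.prod_singleton,
      mul_apply_eq_comp, ih (fun j => g j.succ) _ (fun j => h _) _ z hz, h 0 a z hz]
    simp only [Fin.prod_univ_succ]
    ring

lemma list_prod_split {M : Type*} [Monoid M] (n : ℕ) (L : Fin n → M)
    (hc : ∀ i j, Commute (L i) (L j)) (j : Fin n) :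
    ∃ X, Commute X (L j) ∧ (List.ofFn L).prod = X * L j := by
  have hmem : L j ∈ List.ofFn L := by simp
  obtain ⟨s, t, hst⟩ := List.append_of_mem hmem
  have hcs : ∀ x ∈ s ++ L j :: t, Commute (L j) x := by
    intro x hx
    rw [← hst, List.mem_ofFn] at hx
    obtain ⟨i, rfl⟩ := hx
    exact hc _ _
  have h1 : Commute (L j) s.prod := Commute.list_prod_right _ _ fun x hx => hcs x (by simp [hx])
  have h2 : Commute (L j) t.prod := Commute.list_prod_right _ _ fun x hx => hcs x (by simp [hx])
  refine ⟨s.prod * t.prod, (h1.mul_right h2).symm, ?_⟩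
  rw [hst, List.prod_append, List.prod_cons, h2.eq, mul_assoc]

lemma commute_inverse {R : Type*} [Ring R] {a b : R} (h : Commute a b) :
    Commute a (Ring.inverse b) := by
  by_cases hb : IsUnit b
  · obtain ⟨u, rfl⟩ := hb
    rw [Ring.inverse_unit]
    exact h.units_inv_right
  · rw [Ring.inverse_non_unit _ hb]
    exact Commute.zero_right _

/-- Linear independence, from the existence of a left inverse. -/
lemma indep_of_left_inv (m : ℕ) (L T : H2 →L[ℂ] H2) (hLT : L * T = 1) (f : Fin m → H2)
    (hf : ∀ j, L (f j) = 0) (hind : LinearIndependent ℂ f) :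
    LinearIndependent ℂ (fun p : Fin m × ℕ => (T ^ p.2) (f p.1)) := by
  classical
  have hpow : ∀ n x, (L ^ n) ((T ^ n) x) = x := by
    intro n
    induction n with
    | zero => intro x; simp
    | succ n ih =>
      intro x
      have h1 : L (T ((T ^ n) x)) = (T ^ n) x := by
        rw [← mul_apply_eq_comp, hLT]; rfl
      rw [pow_succ, pow_succ', mul_apply_eq_comp, mul_apply_eq_comp, h1, ih]
  have hlow : ∀ n k x, L x = 0 → k < n → (L ^ n) ((T ^ k) x) = 0 := by
    intro n k x hx hk
    obtain ⟨d, rfl⟩ : ∃ d, n = (d + 1) + k := ⟨n - k - 1, by omega⟩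
    rw [pow_add, mul_apply_eq_comp, hpow, pow_succ, mul_apply_eq_comp, hx, map_zero]
  have main : ∀ (N : ℕ) (g : Fin m → ℕ → ℂ),
      ∑ n ∈ Finset.range N, ∑ j, g j n • (T ^ n) (f j) = 0 → ∀ n < N, ∀ j, g j n = 0 := by
    intro N
    induction N with
    | zero => intro g _ n hn; omega
    | succ N ih =>
      intro g hg
      have h1 := congrArg (L ^ N) hg
      rw [Finset.sum_range_succ, map_add, map_sum, map_zero] at h1
      rw [Finset.sum_eq_zero, zero_add, map_sum] at h1
      · simp only [map_smul, hpow] at h1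
        have h2 := Fintype.linearIndependent_iff.1 hind (fun j => g j N) h1
        rw [Finset.sum_range_succ] at hg
        simp only [h2, zero_smul, Finset.sum_const_zero, add_zero] at hg
        intro n hn j
        rcases Nat.lt_succ_iff_lt_or_eq.1 hn with h | rfl
        · exact ih g hg n h j
        · exact h2 j
      · intro n hn
        rw [map_sum]
        refine Finset.sum_eq_zero fun j _ => ?_
        rw [map_smul, hlow N n _ (hf j) (Finset.mem_range.1 hn), smul_zero]
  rw [linearIndependent_iff']
  intro s g hg p hp
  obtain ⟨N, hN⟩ : ∃ N, ∀ q ∈ s, q.2 < N :=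
    ⟨s.sup (fun q => q.2) + 1, fun q hq => Nat.lt_succ_of_le (Finset.le_sup (f := fun q => q.2) hq)⟩
  have hsub : s ⊆ Finset.univ ×ˢ Finset.range N := fun q hq => by
    simp [hN q hq]
  have := main N (fun j n => if (j, n) ∈ s then g (j, n) else 0) ?_ p.2 (hN p hp) p.1
  · simpa [hp] using this
  · rw [← hg, Finset.sum_comm, ← Finset.sum_product', ← Finset.sum_subset hsub]
    · refine Finset.sum_congr rfl fun q hq => ?_
      simp [hq]
    · intro q _ hq
      simp [hq]

/-- Kernels of powers of `L` lie in the span of the family. -/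
lemma ker_pow_mem (m : ℕ) (L T : H2 →L[ℂ] H2) (hLT : L * T = 1) (f : Fin m → H2)
    (hf : ∀ x, L x = 0 → x ∈ Submodule.span ℂ (Set.range f)) :
    ∀ (N : ℕ) (x : H2), (L ^ N) x = 0 →
      x ∈ Submodule.span ℂ (Set.range (fun p : Fin m × ℕ => (T ^ p.2) (f p.1))) := by
  set V := Submodule.span ℂ (Set.range (fun p : Fin m × ℕ => (T ^ p.2) (f p.1))) with hV
  have hT : ∀ x ∈ V, T x ∈ V := by
    intro x hx
    have : V ≤ V.comap (T : H2 →ₗ[ℂ] H2) := by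
      conv_lhs => rw [hV]
      rw [Submodule.span_le]
      rintro _ ⟨p, rfl⟩
      refine Submodule.subset_span ⟨(p.1, p.2 + 1), ?_⟩
      simp only [pow_succ', mul_apply_eq_comp]
      rfl
    exact this hx
  have h0 : Submodule.span ℂ (Set.range f) ≤ V := by
    rw [Submodule.span_le]
    rintro _ ⟨j, rfl⟩
    exact Submodule.subset_span ⟨(j, 0), by simp⟩
  intro N
  induction N with
  | zero => intro x hx; simp at hx; rw [hx]; exact V.zero_mem
  | succ N ih =>
    intro x hx
    have h1 : L x ∈ V := ih (L x) (by rw [← mul_apply_eq_comp, ← pow_succ]; exact hx)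
    have h2 : x - T (L x) ∈ V := by
      refine h0 (hf _ ?_)
      have : L (T (L x)) = L x := by rw [← mul_apply_eq_comp, hLT]; rfl
      rw [map_sub, this, sub_self]
    have := V.add_mem h2 (hT _ h1)
    simpa using this

/-- Let `H²_β` come from a weight sequence `w_k → 1`, let
`B(z) = ∏_{j=1}^m (z_j - z)/(1 - conj z_j · z)` be a Blaschke product of order `m`,
and let `{f_1, …, f_m}` be a basis of `Ker B̄(S)`.  Then the family
`{f_j · B^n : 1 ≤ j ≤ m, n ≥ 0}` is total and finitely linearly independent in `H²_β`. -/
theorem statement7 (w : ℕ → ℝ) (hpos : ∀ k, 1 ≤ k → 0 < w k)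
    (hlim : Tendsto w atTop (nhds 1)) (m : ℕ) (hm : 0 < m)
    (zs : Fin m → ℂ) (hzs : ∀ j, zs j ∈ unitDisk)
    (B : ℂ → ℂ) (hB : ∀ z, B z = ∏ j, mobius (zs j) z)
    (S : H2 →L[ℂ] H2) (hS : RepS (betaSeq w) S)
    (f : Fin m → H2)
    (hker : Submodule.span ℂ (Set.range f) = LinearMap.ker (blaschkeBarOp zs S : H2 →ₗ[ℂ] H2))
    (hind : LinearIndependent ℂ f) :
    ∃ c : Fin m × ℕ → H2,
      (∀ (j : Fin m) (n : ℕ), ∀ z ∈ unitDisk,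
        repFun (betaSeq w) (c (j, n)) z = repFun (betaSeq w) (f j) z * B z ^ n) ∧
      (Submodule.span ℂ (Set.range c)).topologicalClosure = ⊤ ∧
      LinearIndependent ℂ c := by
  have hv0 : ∀ k, 0 < w (k + 1) := fun k => hpos _ (by omega)
  have hl1 : Tendsto (fun k => w (k + 1)) atTop (𝓝 1) := (tendsto_add_atTop_iff_nat 1).2 hlim
  have hl2 : Tendsto (fun k => (w (k + 1))⁻¹) atTop (𝓝 1) := by
    simpa using hl1.inv₀ one_ne_zero
  have hzn : ∀ j, ‖zs j‖ < 1 := fun j => by simpa [unitDisk] using hzs j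
  have hzc : ∀ j, ‖(starRingEnd ℂ) (zs j)‖ < 1 := fun j => by simpa using hzn j
  obtain ⟨M, hM⟩ := hl1.bddAbove_range
  obtain ⟨A, hA0, hA1⟩ := exists_fwd (fun k => w (k + 1)) M
    (fun k => by rw [abs_of_pos (hv0 k)]; exact hM ⟨k, rfl⟩)
  have hSc := S_coeff w hpos hlim S hS
  have hAu : ∀ μ : ℂ, ‖μ‖ < 1 → IsUnit (1 - μ • A) := fun μ hμ =>
    fwd_unit _ hv0 hl1 A hA0 hA1 μ hμ
  have hSu : ∀ μ : ℂ, ‖μ‖ < 1 → IsUnit (1 - μ • S) := fun μ hμ =>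
    bwd_unit _ (fun k => inv_pos.2 (hv0 k)) hl2 S hSc μ hμ
  have hSA : S * A = 1 := by
    ext a k
    have h3 : (w (k + 1) : ℂ) ≠ 0 := by exact_mod_cast (hv0 k).ne'
    rw [mul_apply_eq_comp, hSc, hA1, one_apply_eq_self]
    push_cast
    field_simp
  -- the cyclic vector
  set e : H2 := lp.single 2 0 (1 : ℂ) with he
  have hSe : S e = 0 := by
    ext k
    rw [hSc, he, lp.single_apply_ne _ _ _ (by omega : k + 1 ≠ 0), mul_zero]
    rfl
  have hAe : ∀ k : ℕ, (A ^ k) e = (betaSeq w k : ℂ) • (lp.single 2 k (1 : ℂ) : H2) := by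
    intro k
    induction k with
    | zero => simp [he, betaSeq]
    | succ k ih =>
      rw [pow_succ', mul_apply_eq_comp, ih, map_smul, beta_succ]
      have : A (lp.single 2 k (1 : ℂ) : H2) = (w (k + 1) : ℂ) • (lp.single 2 (k + 1) (1 : ℂ) : H2) := by
        ext i
        rw [lp.coeFn_smul, Pi.smul_apply]
        cases i with
        | zero =>
          rw [hA0, lp.single_apply_ne _ _ _ (by omega : 0 ≠ k + 1), smul_zero]
        | succ i =>
          rw [hA1]
          by_cases h : i = k
          · subst h
            rw [lp.single_apply_self, lp.single_apply_self, smul_eq_mul]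
          · rw [lp.single_apply_ne _ _ _ h, lp.single_apply_ne _ _ _ (by omega : i + 1 ≠ k + 1),
              mul_zero, smul_zero]
      rw [this, smul_smul]
      push_cast
      rfl
  have hcyc : ∀ v : H2, (∀ k : ℕ, inner ℂ v ((A ^ k) e) = 0) → v = 0 := by
    intro v hv
    ext k
    have h2 : (betaSeq w k : ℂ) ≠ 0 := by exact_mod_cast (beta_pos w hpos k).ne'
    have := hv k
    rw [hAe, inner_smul_right, lp.inner_single_right] at this
    have h3 := (mul_eq_zero.1 this).resolve_left h2
    simpa using h3
  -- the factors
  set Lf : Fin m → H2 →L[ℂ] H2 := fun j =>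
    ((starRingEnd ℂ) (zs j) • (1 : H2 →L[ℂ] H2) - S) *
      Ring.inverse ((1 : H2 →L[ℂ] H2) - zs j • S) with hLf
  set Tf : Fin m → H2 →L[ℂ] H2 := fun j =>
    (zs j • (1 : H2 →L[ℂ] H2) - A) *
      Ring.inverse ((1 : H2 →L[ℂ] H2) - (starRingEnd ℂ) (zs j) • A) with hTf
  have hL : blaschkeBarOp zs S = (List.ofFn Lf).prod := rfl
  set L : H2 →L[ℂ] H2 := blaschkeBarOp zs S with hLdef
  set T : H2 →L[ℂ] H2 := (List.ofFn Tf).reverse.prod with hT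
  have hfac : ∀ j, Lf j * Tf j = 1 := by
    intro j
    have e1 : zs j • (1 : H2 →L[ℂ] H2) - A = -((1 - zs j • S) * A) := by
      rw [sub_mul, one_mul, smul_mul_assoc, hSA]; abel
    have e2 : (starRingEnd ℂ) (zs j) • (1 : H2 →L[ℂ] H2) - S =
        -(S * (1 - (starRingEnd ℂ) (zs j) • A)) := by
      rw [mul_sub, mul_smul_comm, hSA, mul_one]; abel
    have e3 : A * (1 - (starRingEnd ℂ) (zs j) • A) = (1 - (starRingEnd ℂ) (zs j) • A) * A := by
      rw [mul_sub, sub_mul, mul_one, one_mul, mul_smul_comm, smul_mul_assoc]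
    have i1 := Ring.inverse_mul_cancel _ (hSu _ (hzn j))
    have i2 := Ring.mul_inverse_cancel _ (hAu _ (hzc j))
    simp only [hLf, hTf]
    rw [e1, e2]
    calc _ = S * (1 - (starRingEnd ℂ) (zs j) • A) * (Ring.inverse (1 - zs j • S) * (1 - zs j • S)) *
          A * Ring.inverse (1 - (starRingEnd ℂ) (zs j) • A) := by
          simp only [neg_mul, mul_neg, neg_neg, mul_assoc]
      _ = S * ((1 - (starRingEnd ℂ) (zs j) • A) * A) *
          Ring.inverse (1 - (starRingEnd ℂ) (zs j) • A) := by
          rw [i1, mul_one, mul_assoc S]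
      _ = (S * A) * ((1 - (starRingEnd ℂ) (zs j) • A) *
          Ring.inverse (1 - (starRingEnd ℂ) (zs j) • A)) := by
          rw [← e3]; simp only [mul_assoc]
      _ = 1 := by rw [hSA, i2, one_mul]
  have hLT : L * T = 1 := by
    rw [hL]; exact list_left_inv m Lf Tf hfac
  have hcomm : ∀ i j, Commute (Lf i) (Lf j) := by
    have c1 : ∀ (c d : ℂ), Commute (c • (1 : H2 →L[ℂ] H2) - S) (d • (1 : H2 →L[ℂ] H2) - S) := by
      intro c d
      refine Commute.sub_left ((Commute.one_left _).smul_left c) ?_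
      exact Commute.sub_right ((Commute.one_right _).smul_right d) (Commute.refl _)
    have c2 : ∀ (c d : ℂ), Commute (c • (1 : H2 →L[ℂ] H2) - S) (1 - d • S) := by
      intro c d
      refine Commute.sub_left ((Commute.one_left _).smul_left c) ?_
      exact Commute.sub_right (Commute.one_right _) ((Commute.refl S).smul_right d)
    have c3 : ∀ (c d : ℂ), Commute (1 - c • S) (1 - d • S) := by
      intro c d
      refine Commute.sub_left (Commute.one_left _) (Commute.smul_left ?_ c)
      exact Commute.sub_right (Commute.one_right _) ((Commute.refl S).smul_right d)
    intro i j
    refine Commute.mul_left (Commute.mul_right (c1 _ _) (commute_inverse (c2 _ _)))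
      (Commute.mul_right (commute_inverse (c2 _ _)).symm (c3 _ _).ringInverse_ringInverse)
  -- representation of T
  have hrepf : ∀ j, RepMul (betaSeq w) (mobius (zs j)) (Tf j) := by
    intro j a z hz
    have hz' : ‖z‖ < 1 := by simpa [unitDisk] using hz
    set b := Ring.inverse ((1 : H2 →L[ℂ] H2) - (starRingEnd ℂ) (zs j) • A) a with hb
    have hab : a = b - (starRingEnd ℂ) (zs j) • A b := by
      have := Ring.mul_inverse_cancel _ (hAu _ (hzc j))
      have := congrArg (fun X : H2 →L[ℂ] H2 => X a) this
      simpa [mul_apply_eq_comp, ← hb] using this.symm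
    have hTa : Tf j a = zs j • b - A b := rfl
    have hsh := rep_shift w hpos hlim A hA0 hA1 b z hz'
    have hne : 1 - (starRingEnd ℂ) (zs j) * z ≠ 0 := by
      intro h
      have h1 : ‖(starRingEnd ℂ) (zs j) * z‖ < 1 := by
        rw [norm_mul]
        exact mul_lt_one_of_nonneg_of_lt_one_left (norm_nonneg _) (hzc j) hz'.le
      rw [← sub_eq_zero.1 h, norm_one] at h1
      exact lt_irrefl _ h1
    have hra : repFun (betaSeq w) a z =
        (1 - (starRingEnd ℂ) (zs j) * z) * repFun (betaSeq w) b z := by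
      conv_lhs => rw [hab]
      rw [rep_sub w hpos hlim _ _ z hz', rep_smul, hsh]
      ring
    rw [hTa, rep_sub w hpos hlim _ _ z hz', rep_smul, hsh, hra]
    unfold mobius
    rw [← mul_assoc, div_mul_cancel₀ _ hne]
    ring
  have hrep : RepMul (betaSeq w) B T := by
    have := list_repMul (betaSeq w) m (fun j => mobius (zs j)) Tf hrepf
    intro a z hz
    rw [hB]
    exact this a z hz
  have hker' : ∀ x, L x = 0 ↔ x ∈ Submodule.span ℂ (Set.range f) := by
    intro x
    rw [hker]
    exact LinearMap.mem_ker.symm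
  refine ⟨fun p => (T ^ p.2) (f p.1), ?_, ?_, ?_⟩
  · intro j n z hz
    change repFun (betaSeq w) ((T ^ n) (f j)) z = _
    induction n with
    | zero => simp
    | succ n ih =>
      rw [pow_succ', mul_apply_eq_comp, hrep _ z hz, ih]
      ring
  · rw [Submodule.topologicalClosure_eq_top_iff, Submodule.eq_bot_iff]
    intro v hv
    have hv' := (Submodule.mem_orthogonal' _ _).1 hv
    refine dense_ker A S e hSA hSe hAu hcyc ((starRingEnd ℂ) (zs ⟨0, hm⟩)) (hzc _) v ?_
    intro N x hx
    apply hv'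
    refine ker_pow_mem m L T hLT f (fun x hx => (hker' x).1 hx) N x ?_
    obtain ⟨X, hX, hLX⟩ := list_prod_split m Lf hcomm ⟨0, hm⟩
    have c2 : Commute ((starRingEnd ℂ) (zs ⟨0, hm⟩) • (1 : H2 →L[ℂ] H2) - S)
        (1 - zs ⟨0, hm⟩ • S) := by
      refine Commute.sub_left ((Commute.one_left _).smul_left _) ?_
      exact Commute.sub_right (Commute.one_right _) ((Commute.refl S).smul_right _)
    have c3 := commute_inverse c2
    have hpw : L ^ N = X ^ N * (Ring.inverse (1 - zs ⟨0, hm⟩ • S) ^ N *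
        ((starRingEnd ℂ) (zs ⟨0, hm⟩) • (1 : H2 →L[ℂ] H2) - S) ^ N) := by
      rw [hL, hLX, hX.mul_pow, ← c3.symm.mul_pow, ← c3.eq]
    rw [hpw, mul_apply_eq_comp, mul_apply_eq_comp, hx, map_zero, map_zero]
  · exact indep_of_left_inv m L T hLT f
      (fun j => (hker' _).2 (Submodule.subset_span ⟨j, rfl⟩)) hind
end
end

section
/- Let H²_β be a weighted Hardy space of polynomial growth, let h₁, h₂ be analytic on an open neighborhood of the closed unit disk with {M_{h₁}}' = {M_{h₂}}' = {M_z}' on H²_β, and let m₁, m₂ be positive integers. Then the direct sum of m₁ copies of M_{h₁} is similar to the direct sum of m₂ copies of M_{h₂} if and only if m₁ = m₂ and M_{h₁} is similar to M_{h₂}, i.e. there exists φ ∈ Aut(𝔻) such that h₂ = h₁ ∘ φ. -/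
noncomputable section

open Complex Filter Topology

/-- The commutant of a bounded operator on `H2`. -/
def commutant (A : H2 →L[ℂ] H2) : Set (H2 →L[ℂ] H2) := {T | T * A = A * T}

lemma wh_beta_zero (w : ℕ → ℝ) : betaSeq w 0 = 1 := by simp [betaSeq]

lemma wh_beta_succ (w : ℕ → ℝ) (k : ℕ) : betaSeq w (k+1) = betaSeq w k * w (k+1) := by
  simp [betaSeq, Finset.prod_Icc_succ_top]

lemma wh_beta_pos {w : ℕ → ℝ} (hw : PolyGrowth w) (k : ℕ) : 0 < betaSeq w k := by
  refine Finset.prod_pos fun j hj => hw.1 j (Finset.mem_Icc.1 hj).1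

lemma wh_tendsto {w : ℕ → ℝ} (hw : PolyGrowth w) :
    Tendsto (fun k => w (k+1)) atTop (𝓝 1) := hw.2.1.comp (tendsto_add_atTop_nat 1)

lemma wh_memlp {f : ℕ → ℂ} (hf : Summable fun k => ‖f k‖^2) : Memℓp f 2 := by
  apply memℓp_gen
  simpa using hf

lemma wh_summable_sq (a : H2) : Summable fun k => ‖a k‖^2 := by
  have := (lp.memℓp a).summable (by norm_num)
  simpa using this

lemma wh_norm_sq (a : H2) : ‖a‖^2 = ∑' k, ‖a k‖^2 := by
  have := lp.norm_rpow_eq_tsum (p := 2) (by norm_num) a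
  simpa using this

def wh_mk (f : ℕ → ℂ) (hf : Summable fun k => ‖f k‖^2) : H2 := ⟨f, wh_memlp hf⟩

@[simp] lemma wh_mk_apply (f : ℕ → ℂ) (hf : Summable fun k => ‖f k‖^2) (k : ℕ) :
    wh_mk f hf k = f k := rfl

/-- generic ratio test summability -/
lemma wh_summable_ratio {w : ℕ → ℝ} (hw : PolyGrowth w) {ρ : ℝ} (h0 : 0 < ρ) (h1 : ρ < 1) :
    Summable fun k => (ρ ^ k / betaSeq w k)^2 := by
  refine summable_of_ratio_test_tendsto_lt_one (l := ρ^2) (by nlinarith) ?_ ?_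
  · refine Eventually.of_forall fun k => ?_
    have := wh_beta_pos hw k
    positivity
  · have h := ((tendsto_const_nhds (x := ρ)).div (wh_tendsto hw) one_ne_zero).pow 2
    rw [div_one] at h
    refine h.congr fun k => ?_
    have hb := wh_beta_pos hw k
    have hwk := hw.1 (k+1) (by omega)
    rw [wh_beta_succ, Real.norm_of_nonneg (by positivity), Real.norm_of_nonneg (by positivity)]
    simp only [Pi.div_apply]
    field_simp
    ring

lemma wh_summable_eval {w : ℕ → ℝ} (hw : PolyGrowth w) {z : ℂ} (hz : ‖z‖ < 1) :
    Summable fun k => ‖z ^ k / (betaSeq w k : ℂ)‖^2 := by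
  obtain ⟨ρ, h0, h1⟩ := exists_between hz
  have hρ : 0 < ρ := (norm_nonneg z).trans_lt h0
  refine (wh_summable_ratio hw hρ h1).of_nonneg_of_le (fun k => by positivity) fun k => ?_
  have hb := wh_beta_pos hw k
  rw [norm_div, norm_pow, Complex.norm_real, Real.norm_of_nonneg hb.le]
  gcongr

/-- evaluation at a point as a continuous functional -/
lemma wh_exists_eval {w : ℕ → ℝ} (hw : PolyGrowth w) {z : ℂ} (hz : ‖z‖ < 1) :
    ∃ E : H2 →L[ℂ] ℂ, ∀ a : H2,
      HasSum (fun k => a k / (betaSeq w k : ℂ) * z ^ k) (E a) := by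
  have hs : Summable fun k => ‖(starRingEnd ℂ) (z ^ k / (betaSeq w k : ℂ))‖^2 := by
    simpa using wh_summable_eval hw hz
  refine ⟨innerSL ℂ (wh_mk _ hs), fun a => ?_⟩
  have := lp.hasSum_inner (𝕜 := ℂ) (wh_mk _ hs) a
  rw [innerSL_apply_apply]
  have e : (fun k => a k / (betaSeq w k : ℂ) * z ^ k) = fun k => inner ℂ (wh_mk _ hs k) (a k) := ?_
  · rw [e]; exact this
  funext k
  simp only [wh_mk_apply, RCLike.inner_apply]
  rw [Complex.conj_conj]
  ring

lemma wh_hasSum {w : ℕ → ℝ} (hw : PolyGrowth w) {z : ℂ} (hz : ‖z‖ < 1) (a : H2) :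
    HasSum (fun k => a k / (betaSeq w k : ℂ) * z ^ k) (repFun (betaSeq w) a z) := by
  obtain ⟨E, hE⟩ := wh_exists_eval hw hz
  exact (hE a).summable.hasSum

def wh_E {w : ℕ → ℝ} (hw : PolyGrowth w) (z : ℂ) (hz : ‖z‖ < 1) : H2 →L[ℂ] ℂ :=
  (wh_exists_eval hw hz).choose

lemma wh_E_apply {w : ℕ → ℝ} (hw : PolyGrowth w) (z : ℂ) (hz : ‖z‖ < 1) (a : H2) :
    wh_E hw z hz a = repFun (betaSeq w) a z :=
  ((wh_exists_eval hw hz).choose_spec a).unique (wh_hasSum hw hz a)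

lemma wh_eball : Metric.eball (0:ℂ) 1 = Metric.ball 0 1 := by
  rw [← Metric.eball_ofReal]; simp

lemma wh_ps {p : ℕ → ℂ} {f : ℂ → ℂ} (h : ∀ z : ℂ, ‖z‖ < 1 → HasSum (fun k => p k * z ^ k) (f z)) :
    HasFPowerSeriesOnBall f (FormalMultilinearSeries.ofScalars ℂ p) 0 1 := by
  constructor
  · refine ENNReal.le_of_forall_nnreal_lt fun r hr => ?_
    have hr1 : (r : ℝ) < 1 := by exact_mod_cast hr
    apply FormalMultilinearSeries.le_radius_of_tendsto (l := 0)
    have := (h (r : ℂ) (by simpa using hr1)).summable.tendsto_atTop_zero.norm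
    simpa [FormalMultilinearSeries.ofScalars_norm] using this
  · norm_num
  · intro y hy
    have hy' : ‖y‖ < 1 := by
      rw [wh_eball] at hy
      simpa using hy
    simpa [FormalMultilinearSeries.ofScalars_apply_eq, smul_eq_mul, mul_comm] using h y hy'

lemma wh_ps_unique {p q : ℕ → ℂ} {f : ℂ → ℂ}
    (h : ∀ z : ℂ, ‖z‖ < 1 → HasSum (fun k => p k * z ^ k) (f z))
    (h' : ∀ z : ℂ, ‖z‖ < 1 → HasSum (fun k => q k * z ^ k) (f z)) : p = q := by
  have := (wh_ps h).hasFPowerSeriesAt.eq_formalMultilinearSeries (wh_ps h').hasFPowerSeriesAt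
  funext k
  have h2 := congrArg (fun P => P.coeff k) this
  simpa [FormalMultilinearSeries.coeff_ofScalars] using h2

lemma wh_differentiableOn {w : ℕ → ℝ} (hw : PolyGrowth w) (a : H2) :
    DifferentiableOn ℂ (repFun (betaSeq w) a) (Metric.ball 0 1) := by
  have := (wh_ps (p := fun k => a k / (betaSeq w k : ℂ)) (f := repFun (betaSeq w) a)
    fun z hz => wh_hasSum hw hz a).differentiableOn
  rwa [wh_eball] at this

lemma wh_ext {w : ℕ → ℝ} (hw : PolyGrowth w) {a b : H2}
    (h : ∀ z : ℂ, ‖z‖ < 1 → repFun (betaSeq w) a z = repFun (betaSeq w) b z) : a = b := by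
  have := wh_ps_unique (fun z hz => wh_hasSum hw hz a) (fun z hz => by
    rw [h z hz]; exact wh_hasSum hw hz b)
  ext k
  have h2 := congrFun this k
  have hb : (betaSeq w k : ℂ) ≠ 0 := by exact_mod_cast (wh_beta_pos hw k).ne'
  simpa [div_left_inj' hb] using h2

lemma wh_mem_disk {z : ℂ} : z ∈ unitDisk ↔ ‖z‖ < 1 := by simp [unitDisk]

/-- weighted backward shift -/
lemma wh_exists_B (v : ℕ → ℝ) {C : ℝ} (hC : 0 ≤ C) (hv : ∀ k, |v k| ≤ C) :
    ∃ B : H2 →L[ℂ] H2, ∀ a k, B a k = (v k : ℂ) * a (k+1) := by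
  have key : ∀ a : H2, ∀ k, ‖(v k : ℂ) * a (k+1)‖^2 ≤ C^2 * ‖a (k+1)‖^2 := fun a k => by
    rw [norm_mul, mul_pow, Complex.norm_real, Real.norm_eq_abs]
    gcongr
    exact hv k
  have hs' : ∀ a : H2, Summable fun k => ‖a (k+1)‖^2 := fun a =>
    (summable_nat_add_iff 1).2 (wh_summable_sq a)
  have hs : ∀ a : H2, Summable fun k => ‖(v k : ℂ) * a (k+1)‖^2 := fun a =>
    ((hs' a).mul_left (C^2)).of_nonneg_of_le (fun k => by positivity) (key a)
  refine ⟨LinearMap.mkContinuous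
    { toFun := fun a => wh_mk _ (hs a)
      map_add' := fun a b => by ext k; simp [mul_add]
      map_smul' := fun c a => by ext k; simp; ring } C fun a => ?_, fun a k => rfl⟩
  refine le_of_sq_le_sq ?_ (by positivity)
  rw [mul_pow, wh_norm_sq, wh_norm_sq a, ← tsum_mul_left]
  calc ∑' k, ‖(v k : ℂ) * a (k+1)‖^2 ≤ ∑' k, C^2 * ‖a (k+1)‖^2 :=
        (hs a).tsum_le_tsum (key a) ((hs' a).mul_left _)
    _ ≤ ∑' k, C^2 * ‖a k‖^2 := by
        rw [tsum_mul_left, tsum_mul_left, (wh_summable_sq a).tsum_eq_zero_add]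
        have : 0 ≤ ‖a 0‖^2 := by positivity
        gcongr
        linarith

lemma wh_prod_bound (v : ℕ → ℝ) (hpos : ∀ k, 0 < v k) (hv : Tendsto v atTop (𝓝 1))
    {ρ : ℝ} (hρ : 1 < ρ) :
    ∃ C : ℝ, 0 ≤ C ∧ ∀ n k, ∏ i ∈ Finset.range n, v (k+i) ≤ C * ρ^n := by
  have hρ0 : 0 < ρ := by linarith
  obtain ⟨N, hN⟩ := eventually_atTop.1 (hv.eventually (gt_mem_nhds hρ))
  set M : ℕ → ℝ := fun m => ∏ i ∈ Finset.range m, max 1 (v i / ρ) with hM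
  have hMpos : ∀ m, 1 ≤ M m := fun m => by
    refine Finset.one_le_prod fun i _ => le_max_left _ _
  have hmono : Monotone M := monotone_nat_of_le_succ fun m => by
    have : M (m+1) = M m * max 1 (v m / ρ) := Finset.prod_range_succ _ _
    rw [this]
    exact le_mul_of_one_le_right (by linarith [hMpos m]) (le_max_left _ _)
  have hconst : ∀ m, M (N+m) = M N := fun m => by
    induction m with
    | zero => rfl
    | succ m ih =>
      have : M (N+m+1) = M (N+m) * max 1 (v (N+m) / ρ) := Finset.prod_range_succ _ _
      rw [← add_assoc, this, ih, max_eq_left, mul_one]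
      rw [div_le_one hρ0]
      exact (hN _ (by omega)).le
  refine ⟨M N, by linarith [hMpos N], fun n k => ?_⟩
  have h1 : ∏ i ∈ Finset.range n, v (k+i) ≤ M (k+n) * ρ^n := by
    induction n with
    | zero => simpa using hMpos k
    | succ n ih =>
      have : M (k+n+1) = M (k+n) * max 1 (v (k+n) / ρ) := Finset.prod_range_succ _ _
      rw [Finset.prod_range_succ, ← add_assoc, this, pow_succ]
      have h2 : v (k+n) ≤ max 1 (v (k+n)/ρ) * ρ := by
        rw [← div_le_iff₀ hρ0]; exact le_max_right _ _
      calc _ ≤ (M (k+n) * ρ^n) * (max 1 (v (k+n)/ρ) * ρ) :=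
            mul_le_mul ih h2 (hpos _).le (by have := hMpos (k+n); positivity)
        _ = _ := by ring
  refine h1.trans ?_
  have : M (k+n) ≤ M N := by rw [← hconst (k+n)]; exact hmono (by omega)
  gcongr

lemma wh_B_pow (v : ℕ → ℝ) {B : H2 →L[ℂ] H2} (hB : ∀ a k, B a k = (v k : ℂ) * a (k+1))
    (n : ℕ) (a : H2) (k : ℕ) :
    (B^n) a k = ((∏ i ∈ Finset.range n, v (k+i) : ℝ) : ℂ) * a (k+n) := by
  induction n generalizing k with
  | zero => simp
  | succ n ih =>
    rw [pow_succ', mul_apply_eq_comp, hB, ih, Finset.prod_range_succ']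
    have e1 : k + 1 + n = k + (n+1) := by omega
    have e2 : ∀ i, k + 1 + i = k + (i+1) := fun i => by omega
    simp only [e1, e2]
    push_cast
    simp
    ring

lemma wh_unit_of_pow {A : Type*} [Ring A] {x : A} {n : ℕ} (h : IsUnit (1 - x^n)) :
    IsUnit (1 - x) := by
  have h1 := geom_sum_mul_neg x n
  have h2 := mul_neg_geom_sum x n
  obtain ⟨u, hu⟩ := h
  refine isUnit_iff_exists_and_exists.2 ⟨⟨(∑ i ∈ Finset.range n, x^i) * ↑u⁻¹, ?_⟩,
    ⟨↑u⁻¹ * (∑ i ∈ Finset.range n, x^i), ?_⟩⟩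
  · rw [← mul_assoc, h2, ← hu, Units.mul_inv]
  · rw [mul_assoc, h1, ← hu, Units.inv_mul]

lemma wh_B_unit (v : ℕ → ℝ) (hpos : ∀ k, 0 < v k) (hv : Tendsto v atTop (𝓝 1))
    {B : H2 →L[ℂ] H2} (hB : ∀ a k, B a k = (v k : ℂ) * a (k+1)) {μ : ℂ} (hμ : ‖μ‖ < 1) :
    IsUnit (1 - μ • B) := by
  obtain ⟨q, hq1, hq2⟩ := exists_between hμ
  have hq0 : 0 < q := (norm_nonneg _).trans_lt hq1
  obtain ⟨C, hC, hP⟩ := wh_prod_bound v hpos hv (ρ := q⁻¹ ) (one_lt_inv₀ hq0 |>.2 hq2)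
  have hn : ∀ n, ‖B^n‖ ≤ C * (q⁻¹)^n := fun n => by
    refine ContinuousLinearMap.opNorm_le_bound _ (by positivity) fun a => ?_
    refine le_of_sq_le_sq ?_ (by positivity)
    rw [mul_pow, wh_norm_sq, wh_norm_sq a, ← tsum_mul_left]
    have hs' : Summable fun k => ‖a (k+n)‖^2 := (summable_nat_add_iff n).2 (wh_summable_sq a)
    have hle : ∑' k, ‖a (k+n)‖^2 ≤ ∑' k, ‖a k‖^2 := by
      rw [← (wh_summable_sq a).sum_add_tsum_nat_add n]
      have : 0 ≤ ∑ i ∈ Finset.range n, ‖a i‖^2 := by positivity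
      linarith
    calc ∑' k, ‖(B^n) a k‖^2 ≤ ∑' k, (C * (q⁻¹)^n)^2 * ‖a (k+n)‖^2 := by
          refine (wh_summable_sq _).tsum_le_tsum (fun k => ?_) (hs'.mul_left _)
          rw [wh_B_pow v hB, norm_mul, mul_pow, Complex.norm_real,
            Real.norm_of_nonneg (Finset.prod_nonneg fun i _ => (hpos _).le)]
          gcongr
          · exact Finset.prod_nonneg fun i _ => (hpos _).le
          · exact hP n k
      _ ≤ _ := by
          rw [tsum_mul_left, tsum_mul_left]
          gcongr
  have ht : Tendsto (fun n => C * (‖μ‖ * q⁻¹)^n) atTop (𝓝 0) := by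
    rw [← mul_zero C]
    refine (tendsto_pow_atTop_nhds_zero_of_lt_one (by positivity) ?_).const_mul C
    rw [← div_eq_mul_inv, div_lt_one hq0]; exact hq1
  obtain ⟨n, hn1⟩ := (ht.eventually (gt_mem_nhds (zero_lt_one))).exists
  refine wh_unit_of_pow (n := n) (isUnit_one_sub_of_norm_lt_one ?_)
  rw [smul_pow, norm_smul, norm_pow]
  refine lt_of_le_of_lt ?_ hn1
  rw [mul_pow]
  calc _ ≤ ‖μ‖^n * (C * (q⁻¹)^n) := by gcongr; exact hn n
    _ = _ := by ring

def wh_e0 : H2 := lp.single 2 0 1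

lemma wh_e0_zero : wh_e0 0 = 1 := by simp [wh_e0]
lemma wh_e0_succ (k : ℕ) : wh_e0 (k+1) = 0 := by simp [wh_e0]

lemma wh_e0_eval {w : ℕ → ℝ} (z : ℂ) : repFun (betaSeq w) wh_e0 z = 1 := by
  rw [repFun, tsum_eq_single 0]
  · simp [wh_e0_zero, wh_beta_zero]
  · intro k hk
    obtain ⟨k, rfl⟩ := Nat.exists_eq_succ_of_ne_zero hk
    simp [wh_e0_succ]

lemma wh_Tz_coord {w : ℕ → ℝ} (hw : PolyGrowth w) {Tz : H2 →L[ℂ] H2}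
    (hTz : RepMul (betaSeq w) (fun z => z) Tz) (a : H2) :
    Tz a 0 = 0 ∧ ∀ k, Tz a (k+1) = (w (k+1) : ℂ) * a k := by
  have h := wh_ps_unique (p := fun k => Tz a k / (betaSeq w k : ℂ))
    (q := fun k => Nat.casesOn k 0 fun k => a k / (betaSeq w k : ℂ))
    (f := repFun (betaSeq w) (Tz a)) (fun z hz => wh_hasSum hw hz _) (fun z hz => by
      rw [hTz a z (wh_mem_disk.2 hz)]
      have h1 := (wh_hasSum hw hz a).mul_left z
      rw [← hasSum_nat_add_iff' 1]
      simp only [Finset.range_one, Finset.sum_singleton]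
      have e : (fun k => a k / (betaSeq w k : ℂ) * z ^ (k+1)) =
          fun k => z * (a k / (betaSeq w k : ℂ) * z ^ k) := by
        funext k; ring
      rw [e]; simpa using h1)
  have hb : ∀ k, (betaSeq w k : ℂ) ≠ 0 := fun k => by exact_mod_cast (wh_beta_pos hw k).ne'
  refine ⟨?_, fun k => ?_⟩
  · have := congrFun h 0
    simpa [wh_beta_zero] using this
  · have := congrFun h (k+1)
    simp only at this
    rw [div_eq_iff (hb _)] at this
    rw [this, wh_beta_succ]
    have := hb k
    push_cast
    field_simp

lemma wh_bdd {v : ℕ → ℝ} (hv : Tendsto v atTop (𝓝 1)) : ∃ C, 0 ≤ C ∧ ∀ k, |v k| ≤ C := by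
  obtain ⟨C, hC⟩ := hv.abs.bddAbove_range
  exact ⟨C, (abs_nonneg _).trans (hC ⟨0, rfl⟩), fun k => hC ⟨k, rfl⟩⟩

lemma wh_exists_R {w : ℕ → ℝ} (hw : PolyGrowth w) {Tz : H2 →L[ℂ] H2}
    (hTz : RepMul (betaSeq w) (fun z => z) Tz) {μ : ℂ} (hμ : ‖μ‖ < 1) :
    ∃ R : H2 →L[ℂ] H2, R * (Tz - μ • 1) = 1 ∧
      ∀ a, (Tz - μ • 1) (R a) = a - repFun (betaSeq w) a μ • wh_e0 := by
  have hv : Tendsto (fun k => (w (k+1))⁻¹) atTop (𝓝 1) := by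
    simpa using (wh_tendsto hw).inv₀ one_ne_zero
  have hpos : ∀ k, 0 < (w (k+1))⁻¹ := fun k => inv_pos.2 (hw.1 _ (by omega))
  obtain ⟨C, hC, hC'⟩ := wh_bdd hv
  obtain ⟨L, hL⟩ := wh_exists_B _ hC hC'
  obtain ⟨u, hu⟩ := wh_B_unit _ hpos hv hL hμ
  have hLT : L * Tz = 1 := by
    ext a k
    have h := (wh_Tz_coord hw hTz a).2 k
    have hwk : (w (k+1) : ℂ) ≠ 0 := by exact_mod_cast (hw.1 (k+1) (by omega)).ne'
    rw [mul_apply_eq_comp, hL, h]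
    push_cast
    simp [hwk]
  have hTL : ∀ a, Tz (L a) = a - a 0 • wh_e0 := fun a => by
    ext k
    have h := wh_Tz_coord hw hTz (L a)
    cases k with
    | zero => rw [h.1]; change 0 = a 0 - a 0 * wh_e0 0; simp [wh_e0_zero]
    | succ k =>
      have hwk : (w (k+1) : ℂ) ≠ 0 := by exact_mod_cast (hw.1 (k+1) (by omega)).ne'
      rw [h.2, hL]; change _ = a (k+1) - a 0 * wh_e0 (k+1); simp [wh_e0_succ, hwk]
  have hcomm : L * (u⁻¹ : (H2 →L[ℂ] H2)ˣ) = (u⁻¹ : (H2 →L[ℂ] H2)ˣ) * L := by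
    have h1 : Commute L (u : H2 →L[ℂ] H2) := by
      rw [hu]
      exact (Commute.one_right L).sub_right ((Commute.refl L).smul_right μ)
    exact h1.units_inv_right.eq
  refine ⟨L * (u⁻¹ : (H2 →L[ℂ] H2)ˣ), ?_, ?_⟩
  · rw [hcomm, mul_assoc, mul_sub, hLT, mul_smul_comm, mul_one, ← hu, Units.inv_mul]
  · intro a
    set b : H2 := (u⁻¹ : (H2 →L[ℂ] H2)ˣ).1 a with hb
    have hub : b - μ • L b = a := by
      have : (u * (u⁻¹ : (H2 →L[ℂ] H2)ˣ) : H2 →L[ℂ] H2) a = a := by rw [Units.mul_inv]; rfl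
      rw [mul_apply_eq_comp, hu] at this
      simpa using this
    have h1 : (Tz - μ • 1) (L b) = a - b 0 • wh_e0 := by
      have : (Tz - μ • 1) (L b) = Tz (L b) - μ • L b := by simp
      rw [this, hTL, ← hub]
      abel
    have h2 : (Tz - μ • 1) ((L * (u⁻¹ : (H2 →L[ℂ] H2)ˣ)) a) = (Tz - μ • 1) (L b) := rfl
    rw [h2, h1]
    have h3 := congrArg (wh_E hw μ hμ) h1
    simp only [sub_apply, smul_apply, map_sub, map_smul,
      wh_E_apply, one_apply_eq_self, wh_e0_eval] at h3
    rw [hTz _ _ (wh_mem_disk.2 hμ)] at h3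
    simp only [smul_eq_mul, sub_self, mul_one] at h3
    rw [sub_eq_zero.1 h3.symm]

lemma wh_Tz_unit {w : ℕ → ℝ} (hw : PolyGrowth w) {Tz : H2 →L[ℂ] H2}
    (hTz : RepMul (betaSeq w) (fun z => z) Tz) {μ : ℂ} (hμ : 1 < ‖μ‖) :
    IsUnit (Tz - μ • 1) := by
  obtain ⟨C, hC, hC'⟩ := wh_bdd (wh_tendsto hw)
  obtain ⟨B, hB⟩ := wh_exists_B _ hC hC'
  have hadj : B = ContinuousLinearMap.adjoint Tz := by
    rw [ContinuousLinearMap.eq_adjoint_iff]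
    intro x y
    have h := wh_Tz_coord hw hTz y
    have h1 := lp.hasSum_inner (𝕜 := ℂ) (B x) y
    have h2 := (hasSum_nat_add_iff' 1).2 (lp.hasSum_inner (𝕜 := ℂ) x (Tz y))
    simp only [Finset.range_one, Finset.sum_singleton, h.1, inner_zero_right, sub_zero] at h2
    refine h1.unique ?_
    have e : (fun k => inner ℂ (B x k) (y k)) = fun k => inner ℂ (x (k+1)) (Tz y (k+1)) := by
      funext k
      rw [h.2, hB]
      simp only [RCLike.inner_apply, map_mul, Complex.conj_ofReal]
      ring
    rw [e]; exact h2
  have hμ0 : μ ≠ 0 := by rintro rfl; simp at hμ; linarith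
  have h1 : ‖(starRingEnd ℂ) μ⁻¹‖ < 1 := by
    rw [RCLike.norm_conj, norm_inv]; exact inv_lt_one_of_one_lt₀ hμ
  have hu := wh_B_unit _ (fun k => hw.1 (k+1) (by omega)) (wh_tendsto hw) hB h1
  have hu2 := hu.star
  rw [hadj, ← ContinuousLinearMap.star_eq_adjoint, star_sub, star_smul, star_star, star_one] at hu2
  have e : Tz - μ • 1 = (-μ) • (1 - star ((starRingEnd ℂ) μ⁻¹) • Tz) := by
    simp [smul_sub, smul_smul, hμ0]
    abel
  rw [e]
  exact hu2.smul (Units.mk0 (-μ) (neg_ne_zero.2 hμ0))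

/-- The symbol of an operator commuting with `M_z`. -/
def wh_sym (w : ℕ → ℝ) (T : H2 →L[ℂ] H2) (z : ℂ) : ℂ := repFun (betaSeq w) (T wh_e0) z

lemma wh_rep_sub {w : ℕ → ℝ} (hw : PolyGrowth w) (a b : H2) {z : ℂ} (hz : ‖z‖ < 1) :
    repFun (betaSeq w) (a - b) z = repFun (betaSeq w) a z - repFun (betaSeq w) b z := by
  simp only [← wh_E_apply hw z hz, map_sub]

lemma wh_rep_smul {w : ℕ → ℝ} (hw : PolyGrowth w) (c : ℂ) (a : H2) {z : ℂ} (hz : ‖z‖ < 1) :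
    repFun (betaSeq w) (c • a) z = c * repFun (betaSeq w) a z := by
  simp only [← wh_E_apply hw z hz, map_smul, smul_eq_mul]

lemma wh_comm_eval {w : ℕ → ℝ} (hw : PolyGrowth w) {Tz : H2 →L[ℂ] H2}
    (hTz : RepMul (betaSeq w) (fun z => z) Tz) {T : H2 →L[ℂ] H2} (hT : T ∈ commutant Tz)
    (a : H2) {z : ℂ} (hz : ‖z‖ < 1) :
    repFun (betaSeq w) (T a) z = wh_sym w T z * repFun (betaSeq w) a z := by
  obtain ⟨R, -, hR⟩ := wh_exists_R hw hTz hz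
  have hT' : ∀ b, T (Tz b) = Tz (T b) := fun b => congrArg (fun A => A b) hT
  have h1 := congrArg T (hR a)
  have h2 := congrArg (wh_E hw z hz) h1
  simp only [sub_apply, smul_apply, map_sub, map_smul,
      wh_E_apply, one_apply_eq_self, hT'] at h2
  rw [hTz _ _ (wh_mem_disk.2 hz)] at h2
  simp only [smul_eq_mul, sub_self] at h2
  rw [sub_eq_zero.1 h2.symm, wh_sym, mul_comm]

lemma wh_comm_comm {w : ℕ → ℝ} (hw : PolyGrowth w) {Tz : H2 →L[ℂ] H2}
    (hTz : RepMul (betaSeq w) (fun z => z) Tz) {T S : H2 →L[ℂ] H2} (hT : T ∈ commutant Tz)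
    (hS : S ∈ commutant Tz) : T * S = S * T := by
  ext1 a
  refine wh_ext hw fun z hz => ?_
  rw [mul_apply_eq_comp, mul_apply_eq_comp, wh_comm_eval hw hTz hT _ hz,
    wh_comm_eval hw hTz hS _ hz, wh_comm_eval hw hTz hS _ hz, wh_comm_eval hw hTz hT _ hz]
  ring

/-- Division in the multiplier algebra. -/
lemma wh_div {w : ℕ → ℝ} (hw : PolyGrowth w) {Tz : H2 →L[ℂ] H2}
    (hTz : RepMul (betaSeq w) (fun z => z) Tz) {T : H2 →L[ℂ] H2} (hT : T ∈ commutant Tz)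
    {μ : ℂ} (hμ : ‖μ‖ < 1) :
    ∃ S ∈ commutant Tz, T - wh_sym w T μ • 1 = (Tz - μ • 1) * S := by
  obtain ⟨R, hR1, hR⟩ := wh_exists_R hw hTz hμ
  set Q := T - wh_sym w T μ • (1 : H2 →L[ℂ] H2) with hQ
  have h1 : (Tz - μ • 1) * (R * Q) = Q := by
    ext1 a
    rw [mul_apply_eq_comp, mul_apply_eq_comp, hR]
    have : repFun (betaSeq w) (Q a) μ = 0 := by
      have : Q a = T a - wh_sym w T μ • a := by simp [hQ]
      rw [this, wh_rep_sub hw _ _ hμ, wh_rep_smul hw _ _ hμ, wh_comm_eval hw hTz hT _ hμ, sub_self]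
    rw [this, zero_smul, sub_zero]
  have hQz : Q * Tz = Tz * Q := by
    rw [hQ, sub_mul, mul_sub, show T * Tz = Tz * T from hT]; simp
  refine ⟨R * Q, ?_, h1.symm⟩
  have hc : Tz * (Tz - μ • 1) = (Tz - μ • 1) * Tz := by simp [mul_sub, sub_mul]
  calc (R * Q) * Tz = R * (Tz * Q) := by rw [mul_assoc, hQz]
    _ = R * (Tz * ((Tz - μ • 1) * (R * Q))) := by rw [h1]
    _ = (R * (Tz - μ • 1)) * (Tz * (R * Q)) := by
        rw [← mul_assoc Tz, hc]; simp only [mul_assoc]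
    _ = Tz * (R * Q) := by rw [hR1, one_mul]

def wh_D (m : ℕ) (T : H2 →L[ℂ] H2) : Hm m →L[ℂ] Hm m :=
  (PiLp.continuousLinearEquiv 2 ℂ (fun _ : Fin m => H2)).symm.toContinuousLinearMap ∘L
    ContinuousLinearMap.pi fun i => T ∘L PiLp.proj 2 (fun _ : Fin m => H2) i

lemma wh_D_eq (m : ℕ) (T : H2 →L[ℂ] H2) (v : Hm m) :
    wh_D m T v = WithLp.toLp 2 (fun i => T (v i)) := rfl

lemma wh_D_apply (m : ℕ) (T : H2 →L[ℂ] H2) (v : Hm m) (i : Fin m) :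
    wh_D m T v i = T (v i) := rfl

def wh_i (m : ℕ) (j : Fin m) : H2 →L[ℂ] Hm m :=
  (PiLp.continuousLinearEquiv 2 ℂ (fun _ : Fin m => H2)).symm.toContinuousLinearMap ∘L
    ContinuousLinearMap.single ℂ (fun _ : Fin m => H2) j

lemma wh_i_apply (m : ℕ) (j : Fin m) (x : H2) (i : Fin m) :
    wh_i m j x i = Pi.single (M := fun _ => H2) j x i := rfl

lemma wh_i_same (m : ℕ) (j : Fin m) (x : H2) : wh_i m j x j = x := by
  rw [wh_i_apply, Pi.single_eq_same]

lemma wh_sum_i (m : ℕ) (v : Hm m) : ∑ j, wh_i m j (v j) = v := by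
  ext1 i
  rw [WithLp.ofLp_sum, Finset.sum_apply]
  simp only [wh_i_apply]
  simp [Finset.sum_pi_single]

lemma wh_D_i (m : ℕ) (T : H2 →L[ℂ] H2) (j : Fin m) (x : H2) :
    wh_D m T (wh_i m j x) = wh_i m j (T x) := by
  ext1 i
  rw [wh_D_apply, wh_i_apply, wh_i_apply]
  by_cases h : i = j
  · subst h; simp
  · simp [h]

def wh_entry {m : ℕ} (Y : Hm m →L[ℂ] Hm m) (i j : Fin m) : H2 →L[ℂ] H2 :=
  PiLp.proj 2 (fun _ : Fin m => H2) i ∘L Y ∘L wh_i m j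

lemma wh_entry_apply {m : ℕ} (Y : Hm m →L[ℂ] Hm m) (i j : Fin m) (x : H2) :
    wh_entry Y i j x = Y (wh_i m j x) i := rfl

lemma wh_entry_comm {m : ℕ} {Y : Hm m →L[ℂ] Hm m} {T : H2 →L[ℂ] H2}
    (h : ∀ v, Y (wh_D m T v) = wh_D m T (Y v)) (i j : Fin m) :
    wh_entry Y i j ∈ commutant T := by
  change wh_entry Y i j * T = T * wh_entry Y i j
  ext1 x
  rw [mul_apply_eq_comp, mul_apply_eq_comp, wh_entry_apply, wh_entry_apply, ← wh_D_i, h, wh_D_apply]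

lemma wh_comm_of_entry {m : ℕ} {Y : Hm m →L[ℂ] Hm m} {T : H2 →L[ℂ] H2}
    (h : ∀ i j, wh_entry Y i j * T = T * wh_entry Y i j) (v : Hm m) :
    Y (wh_D m T v) = wh_D m T (Y v) := by
  conv_lhs => rw [← wh_sum_i m v]
  conv_rhs => rw [← wh_sum_i m v]
  simp only [map_sum]
  refine Finset.sum_congr rfl fun j _ => ?_
  rw [wh_D_i]
  ext1 i
  rw [wh_D_apply]
  exact congrArg (fun A => A (v j)) (h i j)

lemma wh_transfer {w : ℕ → ℝ} (hw : PolyGrowth w) {T₁ T₂ Tz : H2 →L[ℂ] H2}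
    (hTz : RepMul (betaSeq w) (fun z => z) Tz)
    (hc₁ : commutant T₁ = commutant Tz) (hc₂ : commutant T₂ = commutant Tz)
    {m₁ m₂ : ℕ} (hm₂ : 0 < m₂) (X : Hm m₁ ≃L[ℂ] Hm m₂)
    (hX : ∀ v, X (wh_D m₁ T₁ v) = wh_D m₂ T₂ (X v))
    {T : H2 →L[ℂ] H2} (hT : T ∈ commutant Tz) :
    ∃ S ∈ commutant Tz, ∀ v, X (wh_D m₁ T v) = wh_D m₂ S (X v) := by
  set A : Hm m₂ →L[ℂ] Hm m₂ := X.toContinuousLinearMap ∘L wh_D m₁ T ∘L X.symm.toContinuousLinearMap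
    with hA
  have hAa : ∀ u, A u = X (wh_D m₁ T (X.symm u)) := fun u => rfl
  have hX' : ∀ u, X.symm (wh_D m₂ T₂ u) = wh_D m₁ T₁ (X.symm u) := fun u => by
    rw [ContinuousLinearEquiv.symm_apply_eq, hX, X.apply_symm_apply]

  have key : ∀ Y : Hm m₂ →L[ℂ] Hm m₂, (∀ u, Y (wh_D m₂ T₂ u) = wh_D m₂ T₂ (Y u)) →
      ∀ u, A (Y u) = Y (A u) := by
    intro Y hY u
    set Y' : Hm m₁ →L[ℂ] Hm m₁ :=
      X.symm.toContinuousLinearMap ∘L Y ∘L X.toContinuousLinearMap with hY'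
    have hY'a : ∀ v, Y' v = X.symm (Y (X v)) := fun v => rfl
    have h1 : ∀ v, Y' (wh_D m₁ T₁ v) = wh_D m₁ T₁ (Y' v) := fun v => by
      rw [hY'a, hY'a, hX, hY, hX']
    have h2 : ∀ i j, wh_entry Y' i j * T = T * wh_entry Y' i j := fun i j =>
      wh_comm_comm hw hTz (hc₁ ▸ wh_entry_comm h1 i j) hT
    have h3 := wh_comm_of_entry h2 (X.symm u)
    rw [hY'a, hY'a, X.apply_symm_apply, ContinuousLinearEquiv.symm_apply_eq] at h3
    rw [hAa, hAa]
    exact h3.symm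
  let i0 : Fin m₂ := ⟨0, hm₂⟩
  set S := wh_entry A i0 i0 with hS
  have hSc : S ∈ commutant Tz := by
    rw [← hc₂]
    exact wh_entry_comm (key (wh_D m₂ T₂) fun u => rfl) i0 i0
  refine ⟨S, hSc, ?_⟩
  have hAi : ∀ j x, A (wh_i m₂ j x) = wh_i m₂ j (S x) := fun j x => by
    have h1 := key (wh_i m₂ j ∘L PiLp.proj 2 (fun _ : Fin m₂ => H2) i0) (fun u => by
      change wh_i m₂ j (T₂ (u i0)) = wh_D m₂ T₂ (wh_i m₂ j (u i0))
      rw [wh_D_i]) (wh_i m₂ i0 x)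
    change A (wh_i m₂ j ((wh_i m₂ i0 x) i0)) = wh_i m₂ j (A (wh_i m₂ i0 x) i0) at h1
    rw [wh_i_same] at h1
    exact h1
  intro v
  have h1 : A (X v) = X (wh_D m₁ T v) := by rw [hAa, X.symm_apply_apply]
  rw [← h1]
  conv_lhs => rw [← wh_sum_i m₂ (X v)]
  conv_rhs => rw [← wh_sum_i m₂ (X v)]
  simp only [map_sum]
  refine Finset.sum_congr rfl fun j _ => ?_
  rw [wh_D_i, hAi]

lemma wh_D_sub (m : ℕ) (T S : H2 →L[ℂ] H2) (v : Hm m) :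
    wh_D m (T - S) v = wh_D m T v - wh_D m S v := rfl

lemma wh_D_mul (m : ℕ) (T S : H2 →L[ℂ] H2) (v : Hm m) :
    wh_D m (T * S) v = wh_D m T (wh_D m S v) := rfl

lemma wh_D_smul_one (m : ℕ) (c : ℂ) (v : Hm m) :
    wh_D m (c • 1) v = c • v := rfl

lemma wh_sub_smul_mem {Tz T : H2 →L[ℂ] H2} (hT : T ∈ commutant Tz) (c : ℂ) :
    T - c • 1 ∈ commutant Tz := by
  change (T - c • 1) * Tz = Tz * (T - c • 1)
  rw [sub_mul, mul_sub, show T * Tz = Tz * T from hT]; simp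

lemma wh_intertwine_sub {m₁ m₂ : ℕ} {X : Hm m₁ ≃L[ℂ] Hm m₂} {T S : H2 →L[ℂ] H2}
    (h : ∀ v, X (wh_D m₁ T v) = wh_D m₂ S (X v)) (c : ℂ) (v : Hm m₁) :
    X (wh_D m₁ (T - c • 1) v) = wh_D m₂ (S - c • 1) (X v) := by
  rw [wh_D_sub, wh_D_sub, map_sub, h, wh_D_smul_one, wh_D_smul_one, map_smul]

lemma wh_D_inj {m : ℕ} (hm : 0 < m) {T S : H2 →L[ℂ] H2} (h : ∀ v, wh_D m T v = wh_D m S v) :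
    T = S := by
  ext1 x
  have := congrArg (fun u : Hm m => u ⟨0, hm⟩) (h (wh_i m ⟨0, hm⟩ x))
  simpa only [wh_D_i, wh_i_same] using this

lemma wh_sym_sub {w : ℕ → ℝ} (hw : PolyGrowth w) (T : H2 →L[ℂ] H2) (c : ℂ) {z : ℂ}
    (hz : ‖z‖ < 1) : wh_sym w (T - c • 1) z = wh_sym w T z - c := by
  have : (T - c • 1) wh_e0 = T wh_e0 - c • wh_e0 := by simp
  rw [wh_sym, this, wh_rep_sub hw _ _ hz, wh_rep_smul hw _ _ hz, wh_e0_eval, mul_one, wh_sym]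

lemma wh_sym_mul {w : ℕ → ℝ} (hw : PolyGrowth w) {Tz : H2 →L[ℂ] H2}
    (hTz : RepMul (betaSeq w) (fun z => z) Tz) {T : H2 →L[ℂ] H2} (hT : T ∈ commutant Tz)
    (S : H2 →L[ℂ] H2) {z : ℂ} (hz : ‖z‖ < 1) :
    wh_sym w (T * S) z = wh_sym w T z * wh_sym w S z := by
  rw [wh_sym, mul_apply_eq_comp, wh_comm_eval hw hTz hT _ hz, ← wh_sym]

lemma wh_sym_one {w : ℕ → ℝ} (z : ℂ) : wh_sym w 1 z = 1 := wh_e0_eval z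

lemma wh_sym_Tz {w : ℕ → ℝ} {g : ℂ → ℂ} {T : H2 →L[ℂ] H2} (hT : RepMul (betaSeq w) g T)
    {z : ℂ} (hz : ‖z‖ < 1) : wh_sym w T z = g z := by
  rw [wh_sym, hT _ _ (wh_mem_disk.2 hz), wh_e0_eval, mul_one]

lemma wh_Tz_mem (Tz : H2 →L[ℂ] H2) : Tz ∈ commutant Tz := rfl

/-- Main forward lemma. -/
lemma wh_forward {w : ℕ → ℝ} (hw : PolyGrowth w) {T₁ T₂ Tz : H2 →L[ℂ] H2}
    (hTz : RepMul (betaSeq w) (fun z => z) Tz)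
    (hc₁ : commutant T₁ = commutant Tz) (hc₂ : commutant T₂ = commutant Tz)
    {m₁ m₂ : ℕ} (hm₁ : 0 < m₁) (hm₂ : 0 < m₂) (X : Hm m₁ ≃L[ℂ] Hm m₂)
    (hX : ∀ v, X (wh_D m₁ T₁ v) = wh_D m₂ T₂ (X v)) :
    ∃ S ∈ commutant Tz, (∀ v, X (wh_D m₁ Tz v) = wh_D m₂ S (X v)) ∧
      (∀ z : ℂ, ‖z‖ < 1 → ‖wh_sym w S z‖ < 1) ∧ m₂ ≤ m₁ ∧
      ∀ T ∈ commutant Tz, ∀ T' ∈ commutant Tz, (∀ v, X (wh_D m₁ T v) = wh_D m₂ T' (X v)) →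
        ∀ z : ℂ, ‖z‖ < 1 → wh_sym w T' z = wh_sym w T (wh_sym w S z) := by
  obtain ⟨S, hS, hSX⟩ := wh_transfer hw hTz hc₁ hc₂ hm₂ X hX (wh_Tz_mem Tz)

  have hfac : ∀ T ∈ commutant Tz, ∀ T' ∈ commutant Tz,
      (∀ v, X (wh_D m₁ T v) = wh_D m₂ T' (X v)) → ∀ c μ : ℂ, ∀ Q ∈ commutant Tz,
      T - c • 1 = (Tz - μ • 1) * Q → ∀ z : ℂ, ‖z‖ < 1 → wh_sym w S z = μ → wh_sym w T' z = c := by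
    intro T hT T' hT' hTT c μ Q hQ hE z hz hzμ
    obtain ⟨Q', hQ', hQQ⟩ := wh_transfer hw hTz hc₁ hc₂ hm₂ X hX hQ
    have h1 : T' - c • 1 = (S - μ • 1) * Q' := by
      refine wh_D_inj hm₂ fun u => ?_
      obtain ⟨v, rfl⟩ := X.surjective u
      rw [← wh_intertwine_sub hTT, hE, wh_D_mul, wh_D_mul, wh_intertwine_sub hSX, hQQ]
    have h2 := congrArg (fun A => wh_sym w A z) h1
    rw [wh_sym_sub hw _ _ hz, wh_sym_mul hw hTz (wh_sub_smul_mem hS μ) _ hz,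
      wh_sym_sub hw _ _ hz, hzμ, sub_self, zero_mul] at h2
    exact sub_eq_zero.1 h2
  have hle : ∀ z : ℂ, ‖z‖ < 1 → ‖wh_sym w S z‖ ≤ 1 := by
    intro z hz
    by_contra! hgt
    obtain ⟨u, hu⟩ := wh_Tz_unit hw hTz hgt
    have hucomm : (↑u⁻¹ : H2 →L[ℂ] H2) ∈ commutant Tz := by
      have h1 : Commute Tz (u : H2 →L[ℂ] H2) := by
        rw [hu]
        exact (Commute.refl Tz).sub_right ((Commute.one_right Tz).smul_right _)
      exact h1.units_inv_right.eq.symm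
    have h1mem : (1 : H2 →L[ℂ] H2) ∈ commutant Tz := by
      change 1 * Tz = Tz * 1
      simp
    have := hfac 1 h1mem 1 h1mem (fun v => rfl) 0 _ _ hucomm (by
      rw [zero_smul, sub_zero, ← hu, Units.mul_inv]) z hz rfl
    rw [wh_sym_one] at this
    exact one_ne_zero this
  have hlt : ∀ z : ℂ, ‖z‖ < 1 → ‖wh_sym w S z‖ < 1 := by
    intro z hz
    refine lt_of_le_of_ne (hle z hz) fun heq => ?_
    have hmax := Complex.eqOn_of_isPreconnected_of_isMaxOn_norm (f := wh_sym w S)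
      (U := Metric.ball 0 1) (c := z) (convex_ball _ _).isPreconnected Metric.isOpen_ball
      (wh_differentiableOn hw _) (by simpa using hz) (fun y hy => by
        simp only [Function.comp, Set.mem_ofPred_eq, heq]
        exact hle y (by simpa using hy))
    set c := wh_sym w S z with hc
    have h1 : S = c • 1 := by
      ext1 a
      refine wh_ext hw fun y hy => ?_
      have hy2 : wh_sym w S y = c := hmax (by simpa using hy)
      have : (c • (1 : H2 →L[ℂ] H2)) a = c • a := by simp
      rw [wh_comm_eval hw hTz hS _ hy, this, wh_rep_smul hw _ _ hy, hy2]
    have h2 : Tz = c • 1 := by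
      refine wh_D_inj hm₁ fun v => X.injective ?_
      rw [hSX, h1, wh_D_smul_one, wh_D_smul_one, map_smul]
    have h3 : ∀ y : ℂ, ‖y‖ < 1 → y = c := fun y hy => by
      have h4 := wh_sym_Tz hTz hy
      have h5 : (c • (1 : H2 →L[ℂ] H2)) wh_e0 = c • wh_e0 := by simp
      rw [wh_sym, h2, h5, wh_rep_smul hw _ _ hy, wh_e0_eval, mul_one] at h4
      exact h4.symm
    have h6 := (h3 0 (by simp)).trans (h3 (1/2) (by norm_num)).symm
    norm_num at h6
  refine ⟨S, hS, hSX, hlt, ?_, ?_⟩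
  · skip
    set μ := wh_sym w S 0 with hμ
    have h0 : ‖(0:ℂ)‖ < 1 := by simp
    have hμ1 : ‖μ‖ < 1 := hlt 0 h0
    obtain ⟨R, -, hR⟩ := wh_exists_R hw hTz hμ1
    let G : (Fin m₁ → ℂ) →ₗ[ℂ] (Fin m₂ → ℂ) :=
      { toFun := fun x i => wh_E hw 0 h0 (X (∑ j, wh_i m₁ j (x j • wh_e0)) i)
        map_add' := fun x y => by
          funext i
          simp [add_smul, Finset.sum_add_distrib]
        map_smul' := fun c x => by
          funext i
          have : ∑ j, wh_i m₁ j ((c • x) j • wh_e0) = c • ∑ j, wh_i m₁ j (x j • wh_e0) := by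
            simp [Finset.smul_sum, mul_smul]
          rw [this]
          simp }
    have hG : Function.Surjective G := by
      intro y
      set u : Hm m₂ := ∑ j, wh_i m₂ j (y j • wh_e0) with hu
      set v := X.symm u with hv
      refine ⟨fun j => repFun (betaSeq w) (v j) μ, ?_⟩
      have hvdec : v = wh_D m₁ (Tz - μ • 1) (wh_D m₁ R v)
          + ∑ j, wh_i m₁ j (repFun (betaSeq w) (v j) μ • wh_e0) := by
        have : wh_D m₁ (Tz - μ • 1) (wh_D m₁ R v) =
            v - ∑ j, wh_i m₁ j (repFun (betaSeq w) (v j) μ • wh_e0) := by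
          conv_lhs => rw [← wh_sum_i m₁ v]
          conv_rhs => lhs; rw [← wh_sum_i m₁ v]
          rw [← Finset.sum_sub_distrib]
          simp only [map_sum]
          refine Finset.sum_congr rfl fun j _ => ?_
          rw [wh_D_i, wh_D_i, hR, map_sub]
        rw [this]; abel
      have h1 := congrArg X hvdec
      rw [map_add, wh_intertwine_sub hSX, hv, X.apply_symm_apply, ← hv] at h1
      funext i
      have h2 := congrArg (fun q : Hm m₂ => wh_E hw 0 h0 (q i)) h1
      simp only [PiLp.add_apply, map_add] at h2
      rw [wh_D_apply, wh_E_apply hw 0 h0 ((S - μ • 1) _),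
        wh_comm_eval hw hTz (wh_sub_smul_mem hS μ) _ h0, wh_sym_sub hw _ _ h0, ← hμ, sub_self,
        zero_mul, zero_add] at h2
      change wh_E hw 0 h0 _ = _
      rw [← h2, wh_E_apply]
      have h3 : u i = y i • wh_e0 := by
        rw [hu, WithLp.ofLp_sum, Finset.sum_apply]
        simp only [wh_i_apply]
        simp [Finset.sum_pi_single]
      rw [h3, wh_rep_smul hw _ _ h0, wh_e0_eval, mul_one]
    have := LinearMap.finrank_le_finrank_of_surjective hG
    simpa using this
  · intro T hT T' hT' hTT z hz
    obtain ⟨Q, hQ, hE⟩ := wh_div hw hTz hT (hlt z hz)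
    exact hfac T hT T' hT' hTT _ _ Q hQ hE z hz rfl

lemma wh_mob_den {z₀ z : ℂ} (h₀ : ‖z₀‖ < 1) (hz : ‖z‖ < 1) :
    1 - (starRingEnd ℂ) z₀ * z ≠ 0 := by
  intro h
  have h1 : (starRingEnd ℂ) z₀ * z = 1 := (sub_eq_zero.1 h).symm
  have h2 := congrArg norm h1
  rw [norm_mul, RCLike.norm_conj, norm_one] at h2
  nlinarith [norm_nonneg z₀, norm_nonneg z]

lemma wh_mob_norm {z₀ z : ℂ} (h₀ : ‖z₀‖ < 1) (hz : ‖z‖ < 1) : ‖mobius z₀ z‖ < 1 := by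
  have hd := wh_mob_den h₀ hz
  rw [mobius, norm_div, div_lt_one (norm_pos_iff.2 hd)]
  refine lt_of_pow_lt_pow_left₀ 2 (norm_nonneg _) ?_
  have h0' : ‖z₀‖^2 < 1 := by nlinarith [norm_nonneg z₀]
  have hz' : ‖z‖^2 < 1 := by nlinarith [norm_nonneg z]
  rw [← Complex.normSq_eq_norm_sq] at h0' hz' ⊢
  rw [← Complex.normSq_eq_norm_sq]
  simp only [Complex.normSq_apply, Complex.sub_re, Complex.sub_im, Complex.mul_re, Complex.mul_im,
    Complex.one_re, Complex.one_im, Complex.conj_re, Complex.conj_im] at h0' hz' ⊢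
  nlinarith [mul_pos (sub_pos.2 h0') (sub_pos.2 hz')]

lemma wh_mob_invol {z₀ z : ℂ} (h₀ : ‖z₀‖ < 1) (hz : ‖z‖ < 1) :
    mobius z₀ (mobius z₀ z) = z := by
  have hd := wh_mob_den h₀ hz
  have hd2 := wh_mob_den h₀ (wh_mob_norm h₀ hz)
  have hd3 := wh_mob_den h₀ h₀
  rw [mobius, div_eq_iff hd2]
  have e : mobius z₀ z * (1 - (starRingEnd ℂ) z₀ * z) = z₀ - z := div_mul_cancel₀ _ hd
  linear_combination -e

lemma wh_mob_diff {z₀ : ℂ} (h₀ : ‖z₀‖ < 1) :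
    DifferentiableOn ℂ (mobius z₀) (Metric.ball 0 1) := by
  intro z hz
  have hd := wh_mob_den h₀ (by simpa using hz)
  unfold mobius
  refine DifferentiableAt.differentiableWithinAt ?_
  fun_prop (disch := assumption)

lemma wh_aut {ψ η : ℂ → ℂ} (hψ : DifferentiableOn ℂ ψ (Metric.ball 0 1))
    (hη : DifferentiableOn ℂ η (Metric.ball 0 1))
    (mψ : ∀ z, ‖z‖ < 1 → ‖ψ z‖ < 1) (mη : ∀ z, ‖z‖ < 1 → ‖η z‖ < 1)
    (h1 : ∀ z, ‖z‖ < 1 → ψ (η z) = z) (h2 : ∀ z, ‖z‖ < 1 → η (ψ z) = z) :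
    ∃ φ, IsDiskAut φ ∧ ∀ z, ‖z‖ < 1 → ψ z = φ z := by
  set z₀ := η 0 with hz0
  have h0 : ‖(0:ℂ)‖ < 1 := by simp
  have hz₀ : ‖z₀‖ < 1 := mη 0 h0
  set g : ℂ → ℂ := fun z => ψ (mobius z₀ z) with hg
  set k : ℂ → ℂ := fun z => mobius z₀ (η z) with hk
  have hmaps : Set.MapsTo (mobius z₀) (Metric.ball 0 1) (Metric.ball 0 1) := fun z hz => by
    simpa using wh_mob_norm hz₀ (by simpa using hz)
  have hmapsη : Set.MapsTo η (Metric.ball 0 1) (Metric.ball 0 1) := fun z hz => by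
    simpa using mη z (by simpa using hz)
  have hmapsψ : Set.MapsTo ψ (Metric.ball 0 1) (Metric.ball 0 1) := fun z hz => by
    simpa using mψ z (by simpa using hz)
  have hgd : DifferentiableOn ℂ g (Metric.ball 0 1) := hψ.comp (wh_mob_diff hz₀) hmaps
  have hkd : DifferentiableOn ℂ k (Metric.ball 0 1) := (wh_mob_diff hz₀).comp hη hmapsη
  have hg0 : g 0 = 0 := by
    have : mobius z₀ 0 = z₀ := by simp [mobius]
    change ψ (mobius z₀ 0) = 0
    rw [this]; exact h1 0 h0
  have hk0 : k 0 = 0 := by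
    simp [hk, ← hz0, mobius]
  have hgm : Set.MapsTo g (Metric.ball 0 1) (Metric.ball 0 1) := hmapsψ.comp hmaps
  have hkm : Set.MapsTo k (Metric.ball 0 1) (Metric.ball 0 1) := hmaps.comp hmapsη
  have hkg : ∀ z, ‖z‖ < 1 → k (g z) = z := fun z hz => by
    simp only [hk, hg]
    rw [h2 _ (wh_mob_norm hz₀ hz), wh_mob_invol hz₀ hz]
  have hnorm : ∀ z, ‖z‖ < 1 → ‖g z‖ = ‖z‖ := fun z hz => by
    have hgz : ‖g z‖ < 1 := by simpa using hgm (by simpa using hz)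
    refine le_antisymm (Complex.norm_le_norm_of_mapsTo_ball hgd (hgm.mono_right Metric.ball_subset_closedBall) hg0 hz) ?_
    have := Complex.norm_le_norm_of_mapsTo_ball hkd (hkm.mono_right Metric.ball_subset_closedBall) hk0 hgz
    rwa [hkg z hz] at this
  obtain ⟨c, hc, hgc⟩ := Complex.affine_of_mapsTo_ball_of_exists_norm_dslope_eq_div' (c := 0)
    (R₁ := 1) (R₂ := 1) hgd
    (by rw [hg0]; exact hgm.mono_right Metric.ball_subset_closedBall) ⟨1/2, by simp; norm_num, by
      rw [dslope_of_ne _ (by norm_num), slope_def_field, hg0, norm_div, sub_zero, sub_zero,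
        hnorm _ (by norm_num)]
      norm_num⟩
  obtain ⟨θ, hθ⟩ := (Complex.norm_eq_one_iff c).1 (by simpa using hc)
  refine ⟨fun z => Complex.exp (θ * Complex.I) * mobius z₀ z,
    ⟨θ, z₀, wh_mem_disk.2 hz₀, fun z => rfl⟩, fun z hz => ?_⟩
  have h3 := hgc (show mobius z₀ z ∈ Metric.ball 0 1 by simpa using wh_mob_norm hz₀ hz)
  simp only [hg, wh_mob_invol hz₀ hz] at h3
  have hm0 : mobius z₀ 0 = z₀ := by simp [mobius]
  rw [h3, hm0, hz0, h1 0 h0, hθ]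
  simp [mul_comm]

/-- Taylor coefficients of `((z+r)/(1+rz))^j`. -/
def wh_c (r : ℝ) : ℕ → ℕ → ℝ
  | 0, 0 => 1
  | 0, _+1 => 0
  | j+1, 0 => r * wh_c r j 0
  | j+1, k+1 => wh_c r j k + r * wh_c r j (k+1) - r * wh_c r (j+1) k
termination_by j k => (j, k)

lemma wh_c00 (r : ℝ) : wh_c r 0 0 = 1 := by rw [wh_c]
lemma wh_c0s (r : ℝ) (k : ℕ) : wh_c r 0 (k+1) = 0 := by rw [wh_c]
lemma wh_cs0 (r : ℝ) (j : ℕ) : wh_c r (j+1) 0 = r * wh_c r j 0 := by rw [wh_c]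
lemma wh_css (r : ℝ) (j k : ℕ) : wh_c r (j+1) (k+1) =
    wh_c r j k + r * wh_c r j (k+1) - r * wh_c r (j+1) k := by rw [wh_c]

/-- the action of `(1-z^2) d/dz` on coefficient sequences -/
def wh_d {V : Type*} [AddCommGroup V] [Module ℝ V] (x : ℕ → V) : ℕ → V
  | 0 => x 1
  | k+1 => ((k:ℝ)+2) • x (k+2) - (k:ℝ) • x k

lemma wh_c_deriv {r : ℝ} (hr : 1 - r^2 ≠ 0) (j k : ℕ) :
    HasDerivAt (fun r => wh_c r j k) ((1 - r^2)⁻¹ * wh_d (wh_c r j) k) r := by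
  induction j generalizing k with
  | zero =>
    have h0 : wh_d (wh_c r 0) k = 0 := by
      match k with
      | 0 => simp [wh_d, wh_c0s]
      | 1 => simp [wh_d, wh_c0s]
      | k+2 => simp [wh_d, wh_c0s]
    rw [h0, mul_zero]
    cases k with
    | zero => simpa only [wh_c00] using hasDerivAt_const r (1:ℝ)
    | succ k => simpa only [wh_c0s] using hasDerivAt_const r (0:ℝ)
  | succ j ihj =>
    induction k with
    | zero =>
      simp only [wh_cs0]
      refine ((hasDerivAt_id r).mul (ihj 0)).congr_deriv ?_
      simp only [wh_d, wh_css, wh_cs0, id]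
      field_simp
      ring
    | succ k ihk =>
      simp only [wh_css]
      refine (((ihj k).add ((hasDerivAt_id r).mul (ihj (k+1)))).sub
        ((hasDerivAt_id r).mul ihk)).congr_deriv ?_
      cases k with
      | zero =>
        simp only [wh_d, wh_css, wh_cs0, id, smul_eq_mul]
        field_simp
        push_cast
        ring
      | succ k =>
        simp only [wh_d, wh_css, id, smul_eq_mul]
        field_simp
        push_cast
        ring

lemma wh_c_bound {r₀ ρ : ℝ} (h0 : 0 ≤ r₀) (h1 : r₀ < ρ) (h2 : ρ < 1) (j : ℕ) :
    ∃ K, 0 ≤ K ∧ ∀ r, |r| ≤ r₀ → ∀ k, |wh_c r j k| ≤ K * ρ^k := by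
  have hρ : 0 < ρ := by linarith
  induction j with
  | zero =>
    refine ⟨1, zero_le_one, fun r _ k => ?_⟩
    cases k with
    | zero => simp [wh_c00]
    | succ k => rw [wh_c0s]; simp; positivity
  | succ j ih =>
    obtain ⟨K, hK, hb⟩ := ih
    have hd : 0 < ρ - r₀ := by linarith
    set K' := 2 * K / (ρ - r₀) with hK'
    have hK'e : K' * (ρ - r₀) = 2 * K := by rw [hK']; field_simp
    have hK'0 : 0 ≤ K' := by positivity
    refine ⟨K', hK'0, fun r hr k => ?_⟩
    induction k with
    | zero =>
      rw [wh_cs0, abs_mul, pow_zero, mul_one]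
      have := hb r hr 0
      rw [pow_zero, mul_one] at this
      have h3 : |r| * |wh_c r j 0| ≤ 1 * K := by
        gcongr; linarith
      nlinarith
    | succ k ihk =>
      rw [wh_css]
      have a1 := hb r hr k
      have a2 := hb r hr (k+1)
      have hpk : 0 < ρ^k := by positivity
      have b2 : |r * wh_c r j (k+1)| ≤ 1 * (K * ρ^k) := by
        rw [abs_mul]
        have : K * ρ^(k+1) ≤ K * ρ^k := by
          rw [pow_succ, ← mul_assoc]
          exact mul_le_of_le_one_right (by positivity) h2.le
        exact mul_le_mul (by linarith) (a2.trans this) (abs_nonneg _) zero_le_one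
      have b3 : |r * wh_c r (j+1) k| ≤ r₀ * (K' * ρ^k) := by
        rw [abs_mul]; gcongr
      calc _ ≤ |wh_c r j k + r * wh_c r j (k+1)| + |r * wh_c r (j+1) k| := abs_sub _ _
        _ ≤ |wh_c r j k| + |r * wh_c r j (k+1)| + |r * wh_c r (j+1) k| := by
            gcongr; exact abs_add_le _ _
        _ ≤ K * ρ^k + 1 * (K * ρ^k) + r₀ * (K' * ρ^k) := by gcongr
        _ = (2 * K) * ρ^k + r₀ * K' * ρ^k := by ring
        _ = K' * ρ^(k+1) := by rw [← hK'e]; ring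

lemma wh_den {r : ℝ} (hr : |r| < 1) {z : ℂ} (hz : ‖z‖ < 1) : 1 + (r:ℂ) * z ≠ 0 := by
  intro h
  have h1 : (r:ℂ) * z = -1 := by linear_combination h
  have h2 := congrArg norm h1
  rw [norm_mul, Complex.norm_real, Real.norm_eq_abs, norm_neg, norm_one] at h2
  nlinarith [abs_nonneg r, norm_nonneg z]

lemma wh_c_hasSum {r : ℝ} (hr : |r| < 1) {z : ℂ} (hz : ‖z‖ < 1) (j : ℕ) :
    HasSum (fun k => (wh_c r j k : ℂ) * z^k) (((z + r)/(1 + r * z))^j) := by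
  have hsum : ∀ j, Summable (fun k => (wh_c r j k : ℂ) * z^k) := fun j => by
    obtain ⟨ρ, hρ1, hρ2⟩ := exists_between hr
    obtain ⟨K, hK, hb⟩ := wh_c_bound (abs_nonneg r) hρ1 hρ2 j
    refine Summable.of_norm_bounded (g := fun k => K * ‖z‖^k) ?_ fun k => ?_
    · exact (summable_geometric_of_lt_one (norm_nonneg _) hz).mul_left K
    · rw [norm_mul, norm_pow, Complex.norm_real, Real.norm_eq_abs]
      gcongr
      refine (hb r le_rfl k).trans (mul_le_of_le_one_right hK (pow_le_one₀ ?_ hρ2.le))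
      linarith [abs_nonneg r]
  induction j with
  | zero =>
    rw [pow_zero]
    convert hasSum_single (f := fun k => (wh_c r 0 k : ℂ) * z^k) 0 ?_ using 1
    · simp [wh_c00]
    · intro k hk
      obtain ⟨k, rfl⟩ := Nat.exists_eq_succ_of_ne_zero hk
      simp [wh_c0s]
  | succ j ih =>
    set P := ((z + r)/(1 + r * z))^j with hP
    have hS := (hsum (j+1)).hasSum
    set S := ∑' k, (wh_c r (j+1) k : ℂ) * z^k with hSdef
    have hS1 := (hasSum_nat_add_iff' 1).2 hS
    have hP1 := (hasSum_nat_add_iff' 1).2 ih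
    have hcomb := ((ih.mul_left z).add (hP1.mul_left (r:ℂ))).sub (hS.mul_left ((r:ℂ) * z))
    have e : (fun k => z * ((wh_c r j k : ℂ) * z^k) + (r:ℂ) * ((wh_c r j (k+1) : ℂ) * z^(k+1))
        - (r:ℂ) * z * ((wh_c r (j+1) k : ℂ) * z^k)) =
        fun k => (wh_c r (j+1) (k+1) : ℂ) * z^(k+1) := by
      funext k
      rw [wh_css]; push_cast; ring
    rw [e] at hcomb
    have h1 := hS1.unique hcomb
    simp only [Finset.range_one, Finset.sum_singleton, wh_cs0, pow_zero, mul_one] at h1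
    have hd := wh_den hr hz
    have : S = ((z + r)/(1 + r * z))^(j+1) := by
      rw [pow_succ, ← hP, mul_div_assoc', eq_div_iff hd]
      push_cast at h1
      linear_combination h1
    rw [← this]; exact hS

lemma wh_c_zero (j k : ℕ) : wh_c 0 j k = if j = k then 1 else 0 := by
  induction j generalizing k with
  | zero => cases k with
    | zero => simp [wh_c00]
    | succ k => simp [wh_c0s]
  | succ j ih => cases k with
    | zero => simp [wh_cs0]
    | succ k => simp [wh_css, ih]

lemma wh_summable_b {w : ℕ → ℝ} (hw : PolyGrowth w) {ρ : ℝ} (h0 : 0 < ρ) (h1 : ρ < 1) :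
    Summable fun k : ℕ => ((k:ℝ)+2) * (betaSeq w k)^2 * (ρ^k)^2 := by
  have hpos : ∀ k : ℕ, 0 < ((k:ℝ)+2) * (betaSeq w k)^2 * (ρ^k)^2 := fun k => by
    have := wh_beta_pos hw k
    positivity
  refine summable_of_ratio_test_tendsto_lt_one (l := ρ^2) (by nlinarith) 
    (Eventually.of_forall fun k => (hpos k).ne') ?_
  have e : (fun k : ℕ => ‖(((k+1:ℕ):ℝ)+2) * (betaSeq w (k+1))^2 * (ρ^(k+1))^2‖ /
      ‖((k:ℝ)+2) * (betaSeq w k)^2 * (ρ^k)^2‖) = 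
      fun k : ℕ => (1 + (((k+2:ℕ):ℝ))⁻¹) * (w (k+1))^2 * ρ^2 := by
    funext k
    rw [Real.norm_of_nonneg (hpos k).le, Real.norm_of_nonneg (hpos (k+1)).le, wh_beta_succ]
    have := wh_beta_pos hw k
    push_cast
    field_simp
    ring
  rw [e]
  have h2 : Tendsto (fun k : ℕ => (((k+2:ℕ):ℝ))⁻¹) atTop (𝓝 0) :=
    (tendsto_add_atTop_iff_nat (f := fun k : ℕ => ((k:ℝ))⁻¹) 2).2 tendsto_inv_atTop_nhds_zero_nat
  have := ((h2.const_add 1).mul ((wh_tendsto hw).pow 2)).mul_const (ρ^2)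
  simpa using this

lemma wh_consts {w : ℕ → ℝ} (hw : PolyGrowth w) : ∃ A B : ℝ, 0 ≤ A ∧ 0 ≤ B ∧
    (∀ k : ℕ, |((k:ℝ)+1) - k * (w (k+1))^2| ≤ A) ∧
    ∀ k : ℕ, (betaSeq w k)^2 ≤ B * (betaSeq w (k+1))^2 := by
  obtain ⟨C, hC0, hC⟩ := wh_bdd (wh_tendsto hw)
  have hinv : Tendsto (fun k => (w (k+1))⁻¹) atTop (𝓝 1) := by
    simpa using (wh_tendsto hw).inv₀ one_ne_zero
  obtain ⟨D, hD0, hD⟩ := wh_bdd hinv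
  obtain ⟨M, hM⟩ := hw.2.2
  have hM0 : 0 ≤ M := le_trans (by positivity) (hM 1 le_rfl)
  refine ⟨1 + M * (C+1), D^2, by positivity, by positivity, fun k => ?_, fun k => ?_⟩
  · have h1 := hM (k+1) (by omega)
    push_cast at h1
    have h2 : ((k:ℝ)+1) - k * (w (k+1))^2 = 1 - (k * (w (k+1) - 1)) * (w (k+1) + 1) := by ring
    have h3 : |(k:ℝ) * (w (k+1) - 1)| ≤ M := by
      rw [abs_mul, abs_of_nonneg (Nat.cast_nonneg k)]
      refine le_trans ?_ h1
      gcongr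
      linarith
    have h4 : |w (k+1) + 1| ≤ C + 1 := (abs_add_le _ _).trans (by simpa using hC k)
    rw [h2]
    refine (abs_sub _ _).trans ?_
    rw [abs_mul _ (w (k+1) + 1), abs_one]
    gcongr
  · have hp := hw.1 (k+1) (by omega)
    have h1 : 1 ≤ D * w (k+1) := by
      have := hD k
      rw [abs_of_pos (inv_pos.2 hp), inv_le_iff_one_le_mul₀ hp] at this
      exact this
    rw [wh_beta_succ, mul_pow, ← mul_assoc, mul_comm _ ((betaSeq w k)^2), mul_assoc, ← mul_pow]
    exact le_mul_of_one_le_right (by positivity) (one_le_pow₀ h1)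

lemma wh_d_bound {x : ℕ → ℂ} {K ρ : ℝ} (hK : 0 ≤ K) (h0 : 0 < ρ) (h1 : ρ < 1)
    (hx : ∀ k, ‖x k‖ ≤ K * ρ^k) (k : ℕ) : ρ * ‖wh_d x k‖ ≤ 2 * ((k:ℝ)+2) * (K * ρ^k) := by
  cases k with
  | zero =>
    simp only [wh_d]
    have := hx 1
    simp only [pow_one] at this
    have : ‖x 1‖ ≤ K := this.trans (mul_le_of_le_one_right hK h1.le)
    have : ρ * ‖x 1‖ ≤ 1 * K := by gcongr
    simp; linarith
  | succ k =>
    simp only [wh_d]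
    have e1 : ‖((k:ℝ)+2) • x (k+2) - (k:ℝ) • x k‖ ≤ ((k:ℝ)+2) * (K * ρ^k) + k * (K * ρ^k) := by
      refine (norm_sub_le _ _).trans ?_
      rw [norm_smul, norm_smul, Real.norm_of_nonneg (by positivity), Real.norm_of_nonneg (by positivity)]
      gcongr
      · exact (hx _).trans (mul_le_mul_of_nonneg_left (pow_le_pow_of_le_one h0.le h1.le (by omega)) hK)
      · exact hx k
    have e2 : ρ * ‖((k:ℝ)+2) • x (k+2) - (k:ℝ) • x k‖ ≤ ρ * (((k:ℝ)+2) * (K * ρ^k) + k * (K * ρ^k)) := by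
      gcongr
    refine e2.trans ?_
    have h3 : 0 ≤ K * ρ^(k+1) := by positivity
    push_cast
    rw [pow_succ] at h3 ⊢
    nlinarith

lemma wh_seq {w : ℕ → ℝ} (hw : PolyGrowth w) : ∃ L : ℝ, 0 ≤ L ∧
    ∀ (x : ℕ → ℂ) (K ρ : ℝ), 0 ≤ K → 0 < ρ → ρ < 1 → (∀ k, ‖x k‖ ≤ K * ρ^k) →
    |∑' k, (betaSeq w k)^2 * inner ℝ (x k) (wh_d x k)| ≤ L * ∑' k, (betaSeq w k)^2 * ‖x k‖^2 := by
  obtain ⟨A, B, hA0, hB0, hA, hB⟩ := wh_consts hw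
  refine ⟨A * (1 + B), by positivity, fun x K ρ hK h0 h1 hx => ?_⟩
  set b := fun k => (betaSeq w k)^2 with hb
  have hbp : ∀ k, 0 ≤ b k := fun k => by positivity
  have hS := (wh_summable_b hw h0 h1).mul_left (K^2)
  have hxx : ∀ k l, ‖x k‖ * ‖x (k+l)‖ ≤ K^2 * (ρ^k)^2 := fun k l => by
    have : ‖x k‖ * ‖x (k+l)‖ ≤ (K * ρ^k) * (K * ρ^k) := by
      refine mul_le_mul (hx k) ((hx _).trans ?_) (norm_nonneg _) (by positivity)
      exact mul_le_mul_of_nonneg_left (pow_le_pow_of_le_one h0.le h1.le (by omega)) hK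
    exact this.trans (by ring_nf; rfl)
  have hsq : Summable fun k => b k * ‖x k‖^2 := by
    refine Summable.of_nonneg_of_le (fun k => mul_nonneg (hbp k) (by positivity)) (fun k => ?_) hS
    have h2 := hxx k 0
    simp only [add_zero] at h2
    calc b k * ‖x k‖^2 ≤ b k * (K^2 * (ρ^k)^2) := by
          gcongr
          rw [sq]; exact h2
      _ ≤ ((k:ℝ)+2) * (b k * (K^2 * (ρ^k)^2)) := by
          refine le_mul_of_one_le_left (mul_nonneg (hbp k) (by positivity)) ?_
          have : (0:ℝ) ≤ k := Nat.cast_nonneg k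
          linarith
      _ = _ := by simp only [hb]; ring
  set y := fun k => inner ℝ (x k) (x (k+1)) with hy
  have hyb : ∀ k, |y k| ≤ ‖x k‖ * ‖x (k+1)‖ := fun k => abs_real_inner_le_norm _ _
  have hp : Summable fun k : ℕ => b k * ((k:ℝ)+1) * y k := by
    refine Summable.of_norm_bounded hS (fun k => ?_)
    rw [norm_mul, norm_mul, Real.norm_of_nonneg (hbp k), Real.norm_of_nonneg (by positivity), Real.norm_eq_abs]
    calc b k * ((k:ℝ)+1) * |y k| ≤ b k * ((k:ℝ)+2) * (K^2 * (ρ^k)^2) := by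
          gcongr
          · norm_num
          · exact (hyb k).trans (hxx k 1)
      _ = _ := by simp only [hb]; ring
  have hdiff : ∀ k : ℕ, b k * ((k:ℝ)+1) * y k - b (k+1) * k * y k =
      b k * (((k:ℝ)+1) - k * (w (k+1))^2) * y k := fun k => by
    simp only [hb, wh_beta_succ]; ring
  have hdb : ∀ k : ℕ, ‖b k * (((k:ℝ)+1) - k * (w (k+1))^2) * y k‖ ≤
      A * (b k * ‖x k‖^2 + B * (b (k+1) * ‖x (k+1)‖^2)) := fun k => by
    rw [norm_mul, norm_mul, Real.norm_of_nonneg (hbp k), Real.norm_eq_abs, Real.norm_eq_abs]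
    have h2 : |y k| ≤ ‖x k‖^2 + ‖x (k+1)‖^2 := (hyb k).trans (by nlinarith [sq_nonneg (‖x k‖ - ‖x (k+1)‖), sq_nonneg ‖x k‖, sq_nonneg ‖x (k+1)‖])
    calc _ ≤ b k * A * (‖x k‖^2 + ‖x (k+1)‖^2) := by
          gcongr
          exact hA k
      _ = A * (b k * ‖x k‖^2 + b k * ‖x (k+1)‖^2) := by ring
      _ ≤ A * (b k * ‖x k‖^2 + (B * b (k+1)) * ‖x (k+1)‖^2) := by
          gcongr
          exact hB k
      _ = _ := by ring
  have hsq1 : Summable fun k => b (k+1) * ‖x (k+1)‖^2 := (summable_nat_add_iff (f := fun k => b k * ‖x k‖^2) 1).2 hsq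
  have hR := (hsq.add (hsq1.mul_left B)).mul_left A
  have hD : Summable fun k : ℕ => b k * (((k:ℝ)+1) - k * (w (k+1))^2) * y k :=
    Summable.of_norm_bounded hR hdb
  have hq1 : Summable fun k : ℕ => b (k+1) * k * y k := by
    have := hp.sub hD
    refine this.congr fun k => ?_
    rw [← hdiff]; ring
  set q : ℕ → ℝ := fun k => match k with
    | 0 => 0
    | k+1 => b (k+1) * k * y k with hq
  have hqs : Summable q := (summable_nat_add_iff 1).1 hq1
  have hsplit : ∀ k, b k * inner ℝ (x k) (wh_d x k) = b k * ((k:ℝ)+1) * y k - q k := fun k => by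
    cases k with
    | zero => simp [hq, wh_d, hy]
    | succ k =>
      simp only [hq, wh_d, hy]
      rw [inner_sub_right, real_inner_smul_right, real_inner_smul_right, real_inner_comm (x (k+1)) (x k)]
      push_cast
      ring
  have htot : ∑' k, b k * inner ℝ (x k) (wh_d x k) =
      ∑' k : ℕ, b k * (((k:ℝ)+1) - k * (w (k+1))^2) * y k := by
    rw [tsum_congr hsplit, hp.tsum_sub hqs, hqs.tsum_eq_zero_add]
    change _ - (0 + ∑' k : ℕ, b (k+1) * k * y k) = _
    rw [zero_add, ← hp.tsum_sub hq1]
    exact tsum_congr hdiff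
  change |∑' k, b k * inner ℝ (x k) (wh_d x k)| ≤ _
  rw [htot, ← Real.norm_eq_abs]
  refine (tsum_of_norm_bounded hR.hasSum hdb).trans ?_
  rw [tsum_mul_left, hsq.tsum_add (hsq1.mul_left B), tsum_mul_left]
  have h3 : ∑' k, b (k+1) * ‖x (k+1)‖^2 ≤ ∑' k, b k * ‖x k‖^2 := by
    rw [hsq.tsum_eq_zero_add]
    have := mul_nonneg (hbp 0) (sq_nonneg ‖x 0‖)
    linarith
  rw [mul_assoc, add_mul, one_mul]
  gcongr

/-- coefficients of a polynomial composed with a hyperbolic translation -/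
def wh_C (s : Finset ℕ) (α : ℕ → ℂ) (r : ℝ) (k : ℕ) : ℂ := ∑ j ∈ s, wh_c r j k • α j

lemma wh_d_sum (s : Finset ℕ) (α : ℕ → ℂ) (r : ℝ) (k : ℕ) :
    wh_d (wh_C s α r) k = ∑ j ∈ s, wh_d (wh_c r j) k • α j := by
  cases k with
  | zero => simp [wh_d, wh_C]
  | succ k =>
    simp only [wh_d, wh_C, Finset.smul_sum, ← Finset.sum_sub_distrib, sub_smul, smul_eq_mul, mul_smul]

lemma wh_C_deriv (s : Finset ℕ) (α : ℕ → ℂ) {r : ℝ} (hr : 1 - r^2 ≠ 0) (k : ℕ) :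
    HasDerivAt (fun r => wh_C s α r k) ((1 - r^2)⁻¹ • wh_d (wh_C s α r) k) r := by
  rw [wh_d_sum, Finset.smul_sum]
  unfold wh_C
  refine HasDerivAt.fun_sum fun j _ => ?_
  rw [smul_smul]
  exact (wh_c_deriv hr j k).smul_const (α j)

lemma wh_C_bound {r₀ ρ : ℝ} (h0 : 0 ≤ r₀) (h1 : r₀ < ρ) (h2 : ρ < 1) (s : Finset ℕ) (α : ℕ → ℂ) :
    ∃ K, 0 ≤ K ∧ ∀ r, |r| ≤ r₀ → ∀ k, ‖wh_C s α r k‖ ≤ K * ρ^k := by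
  choose K hK0 hK using wh_c_bound h0 h1 h2
  refine ⟨∑ j ∈ s, K j * ‖α j‖, Finset.sum_nonneg fun j _ => mul_nonneg (hK0 j) (norm_nonneg _), 
    fun r hr k => ?_⟩
  unfold wh_C
  refine (norm_sum_le _ _).trans ?_
  rw [Finset.sum_mul]
  refine Finset.sum_le_sum fun j _ => ?_
  rw [norm_smul, Real.norm_eq_abs]
  calc _ ≤ (K j * ρ^k) * ‖α j‖ := by gcongr; exact hK j r hr k
    _ = _ := by ring

lemma wh_sq_summable {w : ℕ → ℝ} (hw : PolyGrowth w) {x : ℕ → ℂ} {K ρ : ℝ} (hK : 0 ≤ K)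
    (h0 : 0 < ρ) (h1 : ρ < 1) (hx : ∀ k, ‖x k‖ ≤ K * ρ^k) :
    Summable fun k => (betaSeq w k)^2 * ‖x k‖^2 := by
  refine Summable.of_nonneg_of_le (fun k => by positivity) (fun k => ?_)
    ((wh_summable_b hw h0 h1).mul_left (K^2))
  calc (betaSeq w k)^2 * ‖x k‖^2 ≤ (betaSeq w k)^2 * (K * ρ^k)^2 := by
        gcongr; exact hx k
    _ ≤ ((k:ℝ)+2) * ((betaSeq w k)^2 * (K * ρ^k)^2) := by
        refine le_mul_of_one_le_left (by positivity) ?_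
        have : (0:ℝ) ≤ k := Nat.cast_nonneg k
        linarith
    _ = _ := by ring

lemma wh_main {w : ℕ → ℝ} (hw : PolyGrowth w) {r₀ : ℝ} (h0 : 0 ≤ r₀) (h1 : r₀ < 1) :
    ∃ Λ : ℝ, 0 ≤ Λ ∧ ∀ (s : Finset ℕ) (α : ℕ → ℂ),
      ∑' k, (betaSeq w k)^2 * ‖wh_C s α r₀ k‖^2 ≤ Λ * ∑ j ∈ s, (betaSeq w j)^2 * ‖α j‖^2 := by
  obtain ⟨L, hL0, hL⟩ := wh_seq hw
  have hq : 0 < 1 - r₀^2 := by nlinarith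
  refine ⟨Real.exp ((2 * (1 - r₀^2)⁻¹ * L) * (r₀ - 0)), by positivity, fun s α => ?_⟩
  obtain ⟨r₁, hr₁, hr₁'⟩ := exists_between h1
  obtain ⟨ρ, hρ, hρ'⟩ := exists_between hr₁'
  have hr₁0 : 0 ≤ r₁ := by linarith
  have hρ0 : 0 < ρ := by linarith
  obtain ⟨K, hK0, hK⟩ := wh_C_bound hr₁0 hρ hρ' s α
  set F : ℝ → ℝ := fun r => ∑' k, (betaSeq w k)^2 * ‖wh_C s α r k‖^2 with hF
  set F' : ℝ → ℝ := fun r => ∑' k, (betaSeq w k)^2 * (2 * inner ℝ (wh_C s α r k)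
    ((1 - r^2)⁻¹ • wh_d (wh_C s α r) k)) with hF'
  have habs : ∀ r ∈ Set.Ioo (-r₁) r₁, |r| ≤ r₁ := fun r hr => abs_le.2 ⟨hr.1.le, hr.2.le⟩
  have hpos1 : ∀ r ∈ Set.Ioo (-r₁) r₁, 0 < 1 - r₁^2 ∧ 1 - r₁^2 ≤ 1 - r^2 := fun r hr => by
    have h2 : r^2 ≤ r₁^2 := sq_le_sq' hr.1.le hr.2.le
    exact ⟨by nlinarith, by linarith⟩
  have hder : ∀ r ∈ Set.Ioo (-r₁) r₁, HasDerivAt F (F' r) r := by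
    intro r hr
    refine hasDerivAt_tsum_of_isPreconnected (t := Set.Ioo (-r₁) r₁) (y₀ := r)
      (g' := fun k r => (betaSeq w k)^2 * (2 * inner ℝ (wh_C s α r k)
        ((1 - r^2)⁻¹ • wh_d (wh_C s α r) k)))
      ((wh_summable_b hw hρ0 hρ').mul_left (4 * K^2 * (1 - r₁^2)⁻¹ * ρ⁻¹)) isOpen_Ioo
      isPreconnected_Ioo ?_ ?_ hr ?_ hr
    · intro k y hy
      have := hpos1 y hy
      exact (wh_C_deriv s α (by linarith : (0:ℝ) < 1 - y^2).ne' k).norm_sq.const_mul _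
    · intro k y hy
      obtain ⟨p1, p2⟩ := hpos1 y hy
      have e1 := hK y (habs y hy)
      have e2 := wh_d_bound hK0 hρ0 hρ' e1 k
      have e3 : ‖wh_d (wh_C s α y) k‖ ≤ ρ⁻¹ * (2 * ((k:ℝ)+2) * (K * ρ^k)) := by
        rw [inv_mul_eq_div, le_div_iff₀ hρ0, mul_comm]; exact e2
      rw [norm_mul, norm_mul, Real.norm_of_nonneg (sq_nonneg _), Real.norm_of_nonneg (zero_le_two),
        real_inner_smul_right, norm_mul, Real.norm_of_nonneg (inv_nonneg.2 (p1.le.trans p2))]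
      have e4 : ‖inner ℝ (wh_C s α y k) (wh_d (wh_C s α y) k)‖ ≤
          (K * ρ^k) * (ρ⁻¹ * (2 * ((k:ℝ)+2) * (K * ρ^k))) :=
        (norm_inner_le_norm _ _).trans (mul_le_mul (e1 k) e3 (norm_nonneg _) (by positivity))
      calc _ ≤ betaSeq w k ^ 2 * (2 * ((1 - r₁^2)⁻¹ *
              ((K * ρ^k) * (ρ⁻¹ * (2 * ((k:ℝ)+2) * (K * ρ^k)))))) := by
            gcongr
        _ = _ := by ring
    · exact wh_sq_summable hw hK0 hρ0 hρ' (hK r (habs r hr))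
  have hsub : ∀ r ∈ Set.Icc 0 r₀, r ∈ Set.Ioo (-r₁) r₁ := fun r hr => by
    rcases hr with ⟨ha, hb⟩
    refine ⟨?_, by linarith⟩
    rcases hr₁0.lt_or_eq with h | h
    · linarith
    · linarith
  have hF0 : ∀ r, 0 ≤ F r := fun r => tsum_nonneg fun k => by positivity
  have hg := norm_le_gronwallBound_of_norm_deriv_right_le (f := F) (f' := F') (δ := ‖F 0‖)
    (K := 2 * (1 - r₀^2)⁻¹ * L) (ε := 0) (a := 0) (b := r₀)
    (fun r hr => (hder r (hsub r hr)).continuousAt.continuousWithinAt)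
    (fun r hr => (hder r (hsub r ⟨hr.1, hr.2.le⟩)).hasDerivWithinAt) le_rfl
    (fun r hr => by
      have hm := hsub r ⟨hr.1, hr.2.le⟩
      have e1 := hL (wh_C s α r) K ρ hK0 hρ0 hρ' (hK r (habs r hm))
      have e2 : 1 - r₀^2 ≤ 1 - r^2 := by nlinarith [hr.1, hr.2]
      have e3 : F' r = (2 * (1 - r^2)⁻¹) * ∑' k, (betaSeq w k)^2 * 
          inner ℝ (wh_C s α r k) (wh_d (wh_C s α r) k) := by
        rw [hF', ← tsum_mul_left]
        refine tsum_congr fun k => ?_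
        rw [real_inner_smul_right]; ring
      rw [e3, norm_mul, Real.norm_of_nonneg (mul_nonneg zero_le_two (inv_nonneg.2 (hq.le.trans e2))),
        Real.norm_of_nonneg (hF0 r), add_zero, Real.norm_eq_abs, mul_assoc _ L]
      gcongr) r₀ ⟨h0, le_rfl⟩
  rw [gronwallBound_ε0, Real.norm_of_nonneg (hF0 _), Real.norm_of_nonneg (hF0 _)] at hg
  have hz : F 0 = ∑ j ∈ s, (betaSeq w j)^2 * ‖α j‖^2 := by
    rw [hF]
    have e : ∀ k, wh_C s α 0 k = if k ∈ s then α k else 0 := fun k => by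
      unfold wh_C
      simp [wh_c_zero]
    simp only [e]
    rw [tsum_eq_sum (s := s)]
    · exact Finset.sum_congr rfl fun j hj => by simp [hj]
    · intro j hj; simp [hj]
  rw [hz, mul_comm] at hg
  exact hg

lemma wh_synth (v : ℕ → H2) {Λ : ℝ} (hΛ : 0 ≤ Λ)
    (h : ∀ (s : Finset ℕ) (a : ℕ → ℂ), ‖∑ j ∈ s, a j • v j‖^2 ≤ Λ * ∑ j ∈ s, ‖a j‖^2) :
    ∃ T : H2 →L[ℂ] H2, ∀ a : H2, HasSum (fun j => a j • v j) (T a) := by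
  have hs : ∀ a : H2, Summable fun j => a j • v j := by
    intro a
    rw [summable_iff_vanishing_norm]
    intro ε hε
    have h2 := summable_iff_vanishing_norm.1 (wh_summable_sq a) (ε^2 / (Λ+1)) (by positivity)
    obtain ⟨s, hs⟩ := h2
    refine ⟨s, fun t ht => ?_⟩
    have h3 := hs t ht
    rw [Real.norm_of_nonneg (Finset.sum_nonneg fun j _ => by positivity), lt_div_iff₀ (by positivity)] at h3
    have h4 := h t (fun j => a j)
    have h5 : 0 ≤ ∑ j ∈ t, ‖a j‖^2 := Finset.sum_nonneg fun j _ => by positivity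
    refine lt_of_pow_lt_pow_left₀ 2 hε.le ?_
    nlinarith
  refine ⟨LinearMap.mkContinuous
    { toFun := fun a => ∑' j, a j • v j
      map_add' := fun a b => ?_
      map_smul' := fun c a => ?_ } (Real.sqrt Λ) fun a => ?_, fun a => (hs a).hasSum⟩
  · rw [← (hs a).tsum_add (hs b)]
    refine tsum_congr fun j => ?_
    rw [← add_smul]; rfl
  · rw [RingHom.id_apply, ← (hs a).tsum_const_smul c]
    refine tsum_congr fun j => ?_
    rw [smul_smul]; rfl
  · change ‖∑' j, a j • v j‖ ≤ _
    refine le_of_tendsto (hs a).hasSum.norm (Eventually.of_forall fun s => ?_)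
    refine le_of_pow_le_pow_left₀ two_ne_zero (by positivity) ?_
    rw [mul_pow, Real.sq_sqrt hΛ, wh_norm_sq a]
    refine (h s (fun j => a j)).trans ?_
    gcongr
    exact (wh_summable_sq a).sum_le_tsum s fun j _ => by positivity

lemma wh_comp_hyp {w : ℕ → ℝ} (hw : PolyGrowth w) {r : ℝ} (h0 : 0 ≤ r) (h1 : r < 1) :
    ∃ T : H2 →L[ℂ] H2, RepComp (betaSeq w) (fun z => (z + r) / (1 + r * z)) T := by
  obtain ⟨Λ, hΛ, hm⟩ := wh_main hw h0 h1
  obtain ⟨ρ, hρ, hρ'⟩ := exists_between h1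
  have hρ0 : 0 < ρ := by linarith
  have habs : |r| = r := abs_of_nonneg h0
  have hsum : ∀ j, Summable fun k => ‖(betaSeq w k : ℂ) * ((wh_c r j k : ℝ) / (betaSeq w j : ℂ))‖^2 := by
    intro j
    obtain ⟨K, hK0, hK⟩ := wh_c_bound h0 hρ hρ' j
    have := wh_sq_summable hw (x := fun k => ((wh_c r j k : ℝ) : ℂ)) hK0 hρ0 hρ'
      (fun k => by rw [Complex.norm_real]; exact hK r habs.le k)
    refine (this.mul_right ((betaSeq w j)^2)⁻¹).congr fun k => ?_
    rw [norm_mul, norm_div, Complex.norm_real, Complex.norm_real, Complex.norm_real, mul_pow, div_pow]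
    simp only [Real.norm_eq_abs, sq_abs]
    ring
  set v : ℕ → H2 := fun j => wh_mk _ (hsum j) with hv
  have hb : ∀ k, (betaSeq w k : ℂ) ≠ 0 := fun k => by exact_mod_cast (wh_beta_pos hw k).ne'
  obtain ⟨T, hT⟩ := wh_synth v hΛ fun s a => by
    have h2 := hm s (fun j => a j / (betaSeq w j : ℂ))
    have e1 : ∑ j ∈ s, (betaSeq w j)^2 * ‖a j / (betaSeq w j : ℂ)‖^2 = ∑ j ∈ s, ‖a j‖^2 := by
      refine Finset.sum_congr rfl fun j _ => ?_
      have := (wh_beta_pos hw j).ne'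
      rw [norm_div, Complex.norm_real, div_pow, Real.norm_eq_abs, sq_abs]
      field_simp
    rw [e1] at h2
    refine le_trans (le_of_eq ?_) h2
    rw [wh_norm_sq]
    refine tsum_congr fun k => ?_
    have e2 : (∑ j ∈ s, a j • v j : H2) k = (betaSeq w k : ℂ) * wh_C s (fun j => a j / (betaSeq w j : ℂ)) r k := by
      rw [lp.coeFn_sum, Finset.sum_apply, wh_C, Finset.mul_sum]
      refine Finset.sum_congr rfl fun j _ => ?_
      change a j * (v j k) = _
      rw [hv, wh_mk_apply, Complex.real_smul]
      ring
    rw [e2, norm_mul, Complex.norm_real, mul_pow, Real.norm_eq_abs, sq_abs]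
  refine ⟨T, fun a z hz => ?_⟩
  rw [wh_mem_disk] at hz
  have h3 := (wh_E hw z hz).hasSum (hT a)
  rw [wh_E_apply] at h3
  refine h3.unique ?_
  · have hn : ‖(z + r) / (1 + r * z)‖ < 1 := by
      have := wh_mob_norm (z₀ := -(r:ℂ)) (z := z) (by rw [norm_neg, Complex.norm_real, Real.norm_eq_abs, habs]; exact h1) hz
      unfold mobius at this
      rw [map_neg, Complex.conj_ofReal] at this
      rw [← norm_neg]
      have e : -((z + (r:ℂ)) / (1 + r * z)) = (-(r:ℂ) - z) / (1 - -(r:ℂ) * z) := by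
        rw [← neg_div]
        congr 1 <;> ring
      rw [e]
      exact this
    have e : (fun j => (wh_E hw z hz) (a j • v j)) =
        fun k => a k / (betaSeq w k : ℂ) * ((z + r) / (1 + r * z)) ^ k := ?_
    · rw [e]
      exact wh_hasSum hw hn a
    funext j
    rw [map_smul, wh_E_apply, smul_eq_mul, div_mul_eq_mul_div, mul_div_assoc]
    congr 1
    have h4 := wh_hasSum hw hz (v j)
    have h5 := (wh_c_hasSum (r := r) (by rw [habs]; exact h1) hz j).div_const (betaSeq w j : ℂ)
    refine h4.unique ?_
    have e : (fun k => v j k / (betaSeq w k : ℂ) * z ^ k) =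
        fun k => (wh_c r j k : ℂ) * z ^ k / (betaSeq w j : ℂ) := by
      funext k
      rw [hv, wh_mk_apply]
      have := hb k
      have := hb j
      field_simp
    rw [e]
    exact h5

lemma wh_comp_rot {w : ℕ → ℝ} (u : ℂ) (hu : ‖u‖ = 1) :
    ∃ T : H2 →L[ℂ] H2, RepComp (betaSeq w) (fun z => u * z) T := by
  have hs : ∀ a : H2, Summable fun k => ‖u^k * a k‖^2 := fun a => by
    refine (wh_summable_sq a).congr fun k => ?_
    rw [norm_mul, norm_pow, hu, one_pow, one_mul]
  refine ⟨LinearMap.mkContinuous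
    { toFun := fun a => wh_mk _ (hs a)
      map_add' := fun a b => ?_
      map_smul' := fun c a => ?_ } 1 fun a => ?_, fun a z _ => ?_⟩
  · apply lp.ext
    funext k
    change u^k * (a k + b k) = u^k * a k + u^k * b k
    ring
  · apply lp.ext
    funext k
    change u^k * (c * a k) = c * (u^k * a k)
    ring
  · change ‖wh_mk _ (hs a)‖ ≤ _
    rw [one_mul]
    refine le_of_pow_le_pow_left₀ two_ne_zero (norm_nonneg _) (le_of_eq ?_)
    rw [wh_norm_sq, wh_norm_sq]
    refine tsum_congr fun k => ?_
    rw [wh_mk_apply, norm_mul, norm_pow, hu, one_pow, one_mul]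
  · unfold repFun
    refine tsum_congr fun k => ?_
    change u^k * a k / _ * z^k = _
    rw [mul_pow]; ring

lemma wh_comp_comp {w : ℕ → ℝ} {φ ψ : ℂ → ℂ} {S T : H2 →L[ℂ] H2} (hψ : ∀ z, ‖z‖ < 1 → ‖ψ z‖ < 1)
    (hS : RepComp (betaSeq w) φ S) (hT : RepComp (betaSeq w) ψ T) :
    RepComp (betaSeq w) (fun z => φ (ψ z)) (T * S) := by
  intro a z hz
  have h : ψ z ∈ unitDisk := wh_mem_disk.2 (hψ z (wh_mem_disk.1 hz))
  change repFun _ (T (S a)) z = _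
  rw [hT _ z hz, hS _ _ h]

lemma wh_comp_mob {w : ℕ → ℝ} (hw : PolyGrowth w) {z₀ : ℂ} (h₀ : ‖z₀‖ < 1) :
    ∃ T : H2 →L[ℂ] H2, RepComp (betaSeq w) (mobius z₀) T := by
  obtain ⟨A, hA⟩ := wh_comp_hyp hw (norm_nonneg z₀) h₀
  set u : ℂ := Complex.exp (z₀.arg * Complex.I) with hu
  have hun : ‖u‖ = 1 := Complex.norm_exp_ofReal_mul_I _
  have hz₀ : (‖z₀‖ : ℂ) * u = z₀ := Complex.norm_mul_exp_arg_mul_I z₀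
  have huu : u * (starRingEnd ℂ) u = 1 := by
    rw [Complex.mul_conj, Complex.normSq_eq_norm_sq, hun]; simp
  obtain ⟨U, hU⟩ := wh_comp_rot (w := w) u hun
  obtain ⟨V, hV⟩ := wh_comp_rot (w := w) (-(starRingEnd ℂ) u) (by rw [norm_neg, RCLike.norm_conj, hun])
  have hn1 : ∀ z : ℂ, ‖z‖ < 1 → ‖-(starRingEnd ℂ) u * z‖ < 1 := fun z hz => by
    rw [norm_mul, norm_neg, RCLike.norm_conj, hun, one_mul]; exact hz
  have key : ∀ z : ℂ, u * ((-(starRingEnd ℂ) u * z + ‖z₀‖) / (1 + ‖z₀‖ * (-(starRingEnd ℂ) u * z))) = mobius z₀ z := by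
    intro z
    unfold mobius
    rw [← mul_div_assoc]
    have e : (starRingEnd ℂ) z₀ = ‖z₀‖ * (starRingEnd ℂ) u := by
      conv_lhs => rw [← hz₀]
      rw [map_mul, Complex.conj_ofReal]
    rw [e]
    congr 1
    · linear_combination (-z) * huu + hz₀
    · ring
  have h2 := wh_comp_comp hn1 (wh_comp_comp (φ := fun z => u * z) (ψ := fun z => (z + (‖z₀‖:ℝ)) / (1 + (‖z₀‖:ℝ) * z)) (fun z hz => ?_) hU hA) hV
  · refine ⟨_, fun a z hz => (h2 a z hz).trans ?_⟩
    rw [← key]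
  · have h3 : z = -(starRingEnd ℂ) u * (-u * z) := by linear_combination (-z) * huu
    have h4 := key (-u * z)
    rw [← h3] at h4
    have h5 := wh_mob_norm h₀ (z := -u * z) (by rw [norm_mul, norm_neg, hun, one_mul]; exact hz)
    rw [← h4, norm_mul, hun, one_mul] at h5
    exact h5

lemma wh_comp_aut {w : ℕ → ℝ} (hw : PolyGrowth w) {φ : ℂ → ℂ} (hφ : IsDiskAut φ) :
    (∀ z, ‖z‖ < 1 → ‖φ z‖ < 1) ∧ ∃ C : H2 ≃L[ℂ] H2, RepComp (betaSeq w) φ (C : H2 →L[ℂ] H2) := by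
  obtain ⟨θ, z₀, hz₀, h⟩ := hφ
  rw [wh_mem_disk] at hz₀
  set u : ℂ := Complex.exp (θ * Complex.I) with hu
  have hun : ‖u‖ = 1 := Complex.norm_exp_ofReal_mul_I _
  have huu : u * (starRingEnd ℂ) u = 1 := by
    rw [Complex.mul_conj, Complex.normSq_eq_norm_sq, hun]; simp
  have hcn : ∀ z : ℂ, ‖z‖ < 1 → ‖(starRingEnd ℂ) u * z‖ < 1 := fun z hz => by
    rw [norm_mul, RCLike.norm_conj, hun, one_mul]; exact hz
  have hmap : ∀ z, ‖z‖ < 1 → ‖φ z‖ < 1 := fun z hz => by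
    rw [h, norm_mul, hun, one_mul]; exact wh_mob_norm hz₀ hz
  obtain ⟨A, hA⟩ := wh_comp_mob hw hz₀
  obtain ⟨U, hU⟩ := wh_comp_rot (w := w) u hun
  obtain ⟨V, hV⟩ := wh_comp_rot (w := w) ((starRingEnd ℂ) u) (by rw [RCLike.norm_conj, hun])
  have h1 := wh_comp_comp (fun z hz => wh_mob_norm hz₀ hz) hU hA
  have h2 := wh_comp_comp hcn hA hV
  have h1' : RepComp (betaSeq w) φ (A * U) := fun a z hz => by rw [h1 a z hz, h]
  have h2m : ∀ z : ℂ, ‖z‖ < 1 → ‖mobius z₀ ((starRingEnd ℂ) u * z)‖ < 1 := fun z hz => 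
    wh_mob_norm hz₀ (hcn z hz)
  have h12 := wh_comp_comp h2m h1' h2
  have h21 := wh_comp_comp hmap h2 h1'
  refine ⟨hmap, ContinuousLinearEquiv.equivOfInverse (A * U) (V * A) (fun a => ?_) (fun a => ?_), h1'⟩
  · refine wh_ext hw fun z hz => ?_
    refine (h12 a z (wh_mem_disk.2 hz)).trans ?_
    congr 1
    beta_reduce
    rw [h, wh_mob_invol hz₀ (hcn z hz)]
    linear_combination z * huu
  · refine wh_ext hw fun z hz => ?_
    refine (h21 a z (wh_mem_disk.2 hz)).trans ?_
    congr 1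
    beta_reduce
    rw [h]
    have : (starRingEnd ℂ) u * (u * mobius z₀ z) = mobius z₀ z := by linear_combination (mobius z₀ z) * huu
    rw [this, wh_mob_invol hz₀ hz]

/-- Let `H²_β` be of polynomial growth, `h₁, h₂` analytic on a
neighbourhood of the closed disk with `{M_{h₁}}' = {M_{h₂}}' = {M_z}'`, and
`m₁, m₂ ≥ 1`.  Then `⊕^{m₁} M_{h₁} ∼ ⊕^{m₂} M_{h₂}` iff `m₁ = m₂` and `h₂ = h₁ ∘ φ`
for some `φ ∈ Aut(𝔻)`. -/
theorem statement18 (w : ℕ → ℝ) (hw : PolyGrowth w) (h₁ h₂ : ℂ → ℂ)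
    (hh₁ : AnalyticOnClosedDisk h₁) (hh₂ : AnalyticOnClosedDisk h₂)
    (T₁ T₂ Tz : H2 →L[ℂ] H2)
    (hT₁ : RepMul (betaSeq w) h₁ T₁) (hT₂ : RepMul (betaSeq w) h₂ T₂)
    (hTz : RepMul (betaSeq w) (fun z => z) Tz)
    (hc₁ : commutant T₁ = commutant Tz) (hc₂ : commutant T₂ = commutant Tz)
    (m₁ m₂ : ℕ) (hm₁ : 0 < m₁) (hm₂ : 0 < m₂) :
    (∃ X : Hm m₁ ≃L[ℂ] Hm m₂, ∀ v : Hm m₁,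
        X (WithLp.toLp 2 (fun i => T₁ (v i))) = WithLp.toLp 2 (fun i => T₂ (X v i))) ↔
      (m₁ = m₂ ∧ ∃ φ : ℂ → ℂ, IsDiskAut φ ∧ ∀ z ∈ unitDisk, h₂ z = h₁ (φ z)) := by
  constructor
  · rintro ⟨X, hX⟩
    have hX' : ∀ v, X.symm (wh_D m₂ T₂ v) = wh_D m₁ T₁ (X.symm v) := fun v => by
      rw [ContinuousLinearEquiv.symm_apply_eq]
      have := hX (X.symm v)
      rw [← wh_D_eq, ← wh_D_eq, X.apply_symm_apply] at this
      exact this.symm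
    obtain ⟨S, hS, hSX, hSn, hle, hcl⟩ := wh_forward hw hTz hc₁ hc₂ hm₁ hm₂ X hX
    obtain ⟨S', hS', hSX', hSn', hle', hcl'⟩ := wh_forward hw hTz hc₂ hc₁ hm₂ hm₁ X.symm hX'
    refine ⟨le_antisymm hle' hle, ?_⟩
    have e1 : ∀ z : ℂ, ‖z‖ < 1 → wh_sym w S' (wh_sym w S z) = z := fun z hz => by
      have h := hcl S' hS' Tz (wh_Tz_mem Tz) (fun v => by
        have := hSX' (X v)
        rw [X.symm_apply_apply, ContinuousLinearEquiv.symm_apply_eq] at this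
        exact this.symm) z hz
      rw [← h, wh_sym_Tz hTz hz]
    have e2 : ∀ z : ℂ, ‖z‖ < 1 → wh_sym w S (wh_sym w S' z) = z := fun z hz => by
      have h := hcl' S hS Tz (wh_Tz_mem Tz) (fun v => by
        rw [ContinuousLinearEquiv.symm_apply_eq]
        have := hSX (X.symm v)
        rw [X.apply_symm_apply] at this
        exact this.symm) z hz
      rw [← h, wh_sym_Tz hTz hz]
    obtain ⟨φ, hφ, hψ⟩ := wh_aut (wh_differentiableOn hw (S wh_e0))
      (wh_differentiableOn hw (S' wh_e0)) hSn hSn' e2 e1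
    refine ⟨φ, hφ, fun z hz => ?_⟩
    rw [wh_mem_disk] at hz
    have h := hcl T₁ (hc₁ ▸ wh_Tz_mem T₁) T₂ (hc₂ ▸ wh_Tz_mem T₂) hX z hz
    rw [wh_sym_Tz hT₂ hz, wh_sym_Tz hT₁ (hSn z hz)] at h
    rw [h, ← hψ z hz]
    rfl
  · rintro ⟨rfl, φ, hφ, hh⟩
    obtain ⟨hmap, C, hC⟩ := wh_comp_aut hw hφ
    have hinter : ∀ a, C (T₁ a) = T₂ (C a) := fun a => by
      refine wh_ext hw fun z hz => ?_
      have hz' := wh_mem_disk.2 hz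
      have hφz := wh_mem_disk.2 (hmap z hz)
      have e1 := hC (T₁ a) z hz'
      have e2 := hC a z hz'
      simp only [ContinuousLinearEquiv.coe_coe] at e1 e2
      rw [e1, hT₁ a _ hφz, hT₂ _ z hz', e2, hh z hz']
    refine ⟨ContinuousLinearEquiv.equivOfInverse (wh_D m₁ (C : H2 →L[ℂ] H2))
      (wh_D m₁ (C.symm : H2 →L[ℂ] H2)) (fun v => ?_) (fun v => ?_), fun v => ?_⟩
    · rw [wh_D_eq, wh_D_eq]
      simp
    · rw [wh_D_eq, wh_D_eq]
      simp
    · simp only [ContinuousLinearEquiv.equivOfInverse_apply, wh_D_eq]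
      congr 1
      funext i
      exact hinter (v i)
end
end
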